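/- arXiv:2101.07573 — 5 statements merged into one kernel-verified Lean document; each statement's English description precedes it below -/
import Mathlib

section
/- Let τ be a first-order language, T a τ-theory, and M a τ-structure. Then the following are equivalent: (1) M is a model of T_∀; (2) there exists a τ-structure N modeling T together with a τ-embedding of M into N. -/
open FirstOrder FirstOrder.Language

universe u v

namespace ModelCompanionship

variable {L : FirstOrder.Language.{u, v}}

/-- Iterated existential quantification over the last `k` bound variables. -/
def exsN {α : Type*} : ∀ {n k : ℕ}, L.BoundedFormula α (n + k) → L.BoundedFormula α n
  | _, 0, φ => φ
  | _, _ + 1, φ => exsN φ.ex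

/-- A sentence is universal (Π₁) if it is the universal closure of a
quantifier-free formula. -/
def IsUniversalSentence (φ : L.Sentence) : Prop :=
  ∃ (n : ℕ) (ψ : L.BoundedFormula Empty n), ψ.IsQF ∧ φ = ψ.alls

/-- A sentence is Π₂ if it is of the form `∀ x⃗ ∃ y⃗ φ` with `φ` quantifier-free. -/
def IsPi2Sentence (φ : L.Sentence) : Prop :=
  ∃ (m k : ℕ) (ψ : L.BoundedFormula Empty (m + k)), ψ.IsQF ∧ φ = (exsN ψ).alls

/-- A formula is existential if it is the existential closure of a
quantifier-free formula. -/
def IsExistentialFormula {α : Type*} (φ : L.Formula α) : Prop :=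
  ∃ (n : ℕ) (ψ : L.BoundedFormula α n), ψ.IsQF ∧ φ = ψ.exs

/-- A formula is universal if it is the universal closure of a
quantifier-free formula. -/
def IsUniversalFormula {α : Type*} (φ : L.Formula α) : Prop :=
  ∃ (n : ℕ) (ψ : L.BoundedFormula α n), ψ.IsQF ∧ φ = ψ.alls

/-- A bundled nonempty `L`-structure (with domain in universe `max u v`). -/
structure BStruc (L : FirstOrder.Language.{u, v}) where
  carrier : Type (max u v)
  [str : L.Structure carrier]
  [nonempty' : Nonempty carrier]

instance (N : BStruc L) : L.Structure N.carrier := N.str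

instance (N : BStruc L) : Nonempty N.carrier := N.nonempty'

/-- `φ` is a semantic consequence of `T`: it holds in every (nonempty) model of `T`. -/
def Consequence (T : L.Theory) (φ : L.Sentence) : Prop :=
  ∀ M : BStruc L, M.carrier ⊨ T → M.carrier ⊨ φ

/-- A formula with free variables is a semantic consequence of `T` if its universal
closure holds in every (nonempty) model of `T`. -/
def FormulaConsequence {α : Type*} (T : L.Theory) (φ : L.Formula α) : Prop :=
  ∀ M : BStruc L, M.carrier ⊨ T → ∀ v : α → M.carrier, φ.Realize v

/-- `T_∀`: the set of universal sentences which are consequences of `T`. -/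
def univConsequences (T : L.Theory) : L.Theory :=
  {φ | IsUniversalSentence φ ∧ Consequence T φ}

/-- A theory is complete if it is satisfiable and decides every sentence. -/
def IsCompleteTheory (T : L.Theory) : Prop :=
  T.IsSatisfiable ∧ ∀ φ : L.Sentence, Consequence T φ ∨ Consequence T φ.not

/-- A theory is Π₁-complete if it is satisfiable and decides every universal sentence. -/
def Pi1Complete (T : L.Theory) : Prop :=
  T.IsSatisfiable ∧ ∀ φ : L.Sentence, IsUniversalSentence φ →
    (Consequence T φ ∨ Consequence T φ.not)

/-- An embedding is Σ₁-elementary (`M ≺₁ N`) if it reflects existential formulas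
with parameters in the domain. -/
def Sigma1Elementary {M : Type*} {N : Type*} [L.Structure M] [L.Structure N]
    (j : M ↪[L] N) : Prop :=
  ∀ (n : ℕ) (φ : L.Formula (Fin n)), IsExistentialFormula φ →
    ∀ a : Fin n → M, φ.Realize (fun i => j (a i)) → φ.Realize a

/-- An embedding is elementary if it preserves and reflects all first-order formulas. -/
def ElementaryEmb {M : Type*} {N : Type*} [L.Structure M] [L.Structure N]
    (j : M ↪[L] N) : Prop :=
  ∀ (n : ℕ) (φ : L.Formula (Fin n)) (a : Fin n → M),
    φ.Realize (fun i => j (a i)) ↔ φ.Realize a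

/-- `M` is `T`-existentially closed: it embeds into a model of `T` and every
embedding of `M` into a model of `T` is Σ₁-elementary. -/
def IsEC (T : L.Theory) (M : Type*) [L.Structure M] : Prop :=
  (∃ N : BStruc L, N.carrier ⊨ T ∧ Nonempty (M ↪[L] N.carrier)) ∧
  ∀ N : BStruc L, N.carrier ⊨ T → ∀ j : M ↪[L] N.carrier, Sigma1Elementary j

/-- A theory is model complete if every embedding between its models is elementary. -/
def ModelComplete (T : L.Theory) : Prop :=
  ∀ M N : BStruc L, M.carrier ⊨ T → N.carrier ⊨ T →
    ∀ j : M.carrier ↪[L] N.carrier, ElementaryEmb j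

/-- `Tstar` is the model companion of `T`. -/
def IsModelCompanion (T Tstar : L.Theory) : Prop :=
  (∀ M : BStruc L, M.carrier ⊨ T →
    ∃ N : BStruc L, N.carrier ⊨ Tstar ∧ Nonempty (M.carrier ↪[L] N.carrier)) ∧
  (∀ M : BStruc L, M.carrier ⊨ Tstar →
    ∃ N : BStruc L, N.carrier ⊨ T ∧ Nonempty (M.carrier ↪[L] N.carrier)) ∧
  ModelComplete Tstar

/-- A quantifier-free formula with parameters true in `M` holds in some model of `T`. -/
lemma exists_model_realize (T : L.Theory) (M : Type (max u v)) [L.Structure M] [Nonempty M]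
    (hM : M ⊨ univConsequences T) (φ : L.Formula M) (hφ : φ.IsQF) (hr : φ.Realize (id : M → M)) :
    ∃ N : BStruc L, N.carrier ⊨ T ∧ ∃ w : M → N.carrier, φ.Realize w := by
  classical
  by_contra hcon
  push Not at hcon
  obtain ⟨m0⟩ := ‹Nonempty M›
  let s : Finset M := insert m0 (BoundedFormula.freeVarFinset φ)
  let e := s.equivFin
  let f : M → Fin s.card := fun m =>
    if h : m ∈ s then e ⟨m, h⟩ else e ⟨m0, Finset.mem_insert_self _ _⟩
  let ψ : L.BoundedFormula Empty s.card := BoundedFormula.relabel (fun m => Sum.inr (f m)) φ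
  have hψ : ψ.IsQF := BoundedFormula.IsQF.relabel hφ _
  have key : ∀ (N : Type (max u v)) [L.Structure N] (xs : Fin s.card → N) (d : Empty → N),
      ψ.Realize d xs ↔ φ.Realize (xs ∘ f) := by
    intro N _ xs d
    refine (BoundedFormula.realize_relabel (n := 0)).trans ?_
    rw [Formula.Realize, iff_eq_eq]
    congr 1
    exact Subsingleton.elim _ _
  have hmem : ψ.not.alls ∈ univConsequences T := by
    refine ⟨⟨_, _, hψ.not, rfl⟩, fun N hN => ?_⟩
    refine BoundedFormula.realize_alls.2 fun xs => ?_
    rw [BoundedFormula.realize_not, key]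
    exact hcon N hN _
  have h1 := hM.realize_of_mem _ hmem
  have h2 := BoundedFormula.realize_alls.1 h1 (fun i => ((e.symm i : s) : M))
  rw [BoundedFormula.realize_not, key] at h2
  apply h2
  have hagree : ∀ a : BoundedFormula.freeVarFinset φ,
      ((fun i => ((e.symm i : s) : M)) ∘ f) a = (id : M → M) a := by
    intro a
    have ha : (a : M) ∈ s := Finset.mem_insert_of_mem a.2
    simp [f, ha]
  exact (BoundedFormula.realize_restrictFreeVar (φ := φ) (f := fun a => (a : M))
    (v := (id : M → M)) _ (fun a => (hagree a).symm)).1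
    ((BoundedFormula.realize_restrictFreeVar (φ := φ) (f := fun a => (a : M))
      (v := (id : M → M)) id (fun a => rfl)).2 hr)

/-- Index type of the quantifier-free diagram. -/
abbrev QFDiag (L : FirstOrder.Language.{u, v}) (M : Type (max u v)) [L.Structure M] :=
  {φ : L.Formula M // φ.IsQF ∧ φ.Realize (id : M → M)}

lemma exists_conj (M : Type (max u v)) [L.Structure M] (s : Finset (QFDiag L M)) :
    ∃ φ : QFDiag L M, ∀ (N : BStruc L) (w : M → N.carrier), φ.1.Realize w →
      ∀ i ∈ s, i.1.Realize w := by
  classical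
  induction s using Finset.induction_on with
  | empty => exact ⟨⟨⊤, BoundedFormula.IsQF.top, by simp⟩, by simp⟩
  | insert a s _ ih =>
    obtain ⟨φ, h⟩ := ih
    refine ⟨⟨a.1 ⊓ φ.1, a.2.1.inf φ.2.1, Formula.realize_inf.2 ⟨a.2.2, φ.2.2⟩⟩, ?_⟩
    intro N w hw i hi
    have hw' := Formula.realize_inf.1 hw
    rcases Finset.mem_insert.1 hi with rfl | hi
    · exact hw'.1
    · exact h N w hw'.2 i hi

lemma diag_satisfiable (T : L.Theory) (M : Type (max u v)) [L.Structure M] [Nonempty M]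
    (hM : M ⊨ univConsequences T) :
    Theory.IsSatisfiable (⋃ i : QFDiag L M,
      ((L.lhomWithConstants M).onTheory T ∪ {Formula.equivSentence i.1} : L[[M]].Theory)) := by
  rw [Theory.isSatisfiable_iUnion_iff_isSatisfiable_iUnion_finset]
  intro s
  obtain ⟨φ, hφ⟩ := exists_conj M s
  obtain ⟨N, hN, w, hw⟩ := exists_model_realize T M hM φ.1 φ.2.1 φ.2.2
  letI : (constantsOn M).Structure N.carrier := constantsOn.structure w
  have hall : N.carrier ⊨ (⋃ i ∈ s,
      ((L.lhomWithConstants M).onTheory T ∪ {Formula.equivSentence i.1} : L[[M]].Theory)) := by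
    refine ⟨fun σ hσ => ?_⟩
    simp only [Set.mem_iUnion] at hσ
    obtain ⟨i, hi, hσ⟩ := hσ
    rcases hσ with hσ | hσ
    · exact ((LHom.onTheory_model (L.lhomWithConstants M) T).2 hN).realize_of_mem _ hσ
    · rw [Set.mem_singleton_iff.1 hσ]
      exact (Formula.realize_equivSentence _ _).2 (hφ N w hw i hi)
  exact Theory.Model.isSatisfiable N.carrier

lemma exists_embedding (T : L.Theory) (M : Type (max u v)) [L.Structure M] [Nonempty M]
    (hM : M ⊨ univConsequences T) :
    ∃ N : BStruc L, N.carrier ⊨ T ∧ Nonempty (M ↪[L] N.carrier) := by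
  obtain ⟨N⟩ := diag_satisfiable T M hM
  letI : L.Structure N := (L.lhomWithConstants M).reduct N
  have hN := N.is_model
  let j : M → N := fun a => (L.con a : N)
  have hj : ∀ φ : L.Formula M, φ.IsQF → φ.Realize (id : M → M) → φ.Realize j := by
    intro φ h1 h2
    refine (Formula.realize_equivSentence _ _).1 (hN.realize_of_mem _ ?_)
    exact Set.mem_iUnion.2 ⟨⟨φ, h1, h2⟩, Or.inr rfl⟩
  have hj' : ∀ φ : L.Formula M, φ.IsQF → (φ.Realize j ↔ φ.Realize (id : M → M)) := by
    intro φ h1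
    refine ⟨fun h => ?_, hj φ h1⟩
    by_contra h2
    exact Formula.realize_not.1 (hj φ.not h1.not (Formula.realize_not.2 h2)) h
  refine ⟨⟨N⟩, ?_, ⟨⟨⟨j, ?_⟩, ?_, ?_⟩⟩⟩
  · refine (LHom.onTheory_model (L.lhomWithConstants M) T).1 (hN.mono ?_)
    intro σ hσ
    exact Set.mem_iUnion.2 ⟨⟨⊤, BoundedFormula.IsQF.top, by simp⟩, Or.inl hσ⟩
  · intro a b hab
    have := hj' (Term.equal (Term.var a) (Term.var b)) (BoundedFormula.IsAtomic.equal _ _).isQF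
    simpa [Formula.realize_equal, hab] using this
  · intro n f x
    have := (hj' (Term.equal (Term.var (Structure.funMap f x))
      (Term.func f fun i => Term.var (x i))) (BoundedFormula.IsAtomic.equal _ _).isQF).2
      (by simp [Formula.realize_equal])
    simp only [Formula.realize_equal, Term.realize_var, Term.realize_func] at this
    exact this
  · intro n r x
    have := hj' (r.formula fun i => Term.var (x i)) (BoundedFormula.IsAtomic.rel _ _).isQF
    simp only [Formula.realize_rel, Term.realize_var] at this
    exact this

/-- A structure models `T_∀` iff it embeds into a model of `T`. -/
theorem models_univConsequences_iff_embeds_into_model (T : L.Theory)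
    (M : Type (max u v)) [L.Structure M] [Nonempty M] :
    M ⊨ univConsequences T ↔
      ∃ N : BStruc L, N.carrier ⊨ T ∧ Nonempty (M ↪[L] N.carrier) := by
  refine ⟨exists_embedding T M, ?_⟩
  rintro ⟨N, hN, ⟨j⟩⟩
  refine ⟨?_⟩
  rintro _ ⟨⟨n, ψ, hψ, rfl⟩, hc⟩
  refine BoundedFormula.realize_alls.2 fun xs => ?_
  refine (hψ.realize_embedding j).1 ?_
  have h := BoundedFormula.realize_alls.1 (hc N hN) (j ∘ xs)
  convert h

end ModelCompanionship
end

section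
/- (Resurrection Lemma) Let τ be a first-order language and let M, N be τ-structures with a τ-embedding j : M → N that is Σ₁-elementary (for every existential formula φ and every tuple a⃗ from M, M ⊨ φ(a⃗) iff N ⊨ φ(j(a⃗))). Then there exist a τ-structure Q and a τ-embedding k : N → Q such that the composite k ∘ j : M → Q is an elementary embedding. -/
open FirstOrder FirstOrder.Language

universe u v

namespace ModelCompanionship

variable {L : FirstOrder.Language.{u, v}}

/-- Realization depends only on the free variables. -/
theorem realize_congr_free {α : Type*} [DecidableEq α] {M : Type*} [L.Structure M]
    (φ : L.Formula α) (v w : α → M) (h : ∀ a ∈ φ.freeVarFinset, v a = w a) :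
    φ.Realize v ↔ φ.Realize w := by
  unfold Formula.Realize
  rw [← BoundedFormula.realize_restrictFreeVar (φ := φ) (f := id)
      (v := fun a : φ.freeVarFinset => v a) v (fun a => rfl),
    ← BoundedFormula.realize_restrictFreeVar (φ := φ) (f := id)
      (v := fun a : φ.freeVarFinset => v a) w (fun a => h a.1 a.2)]

/-- A quantifier-free formula true in `N` can be pulled back to `M`, fixing `M`. -/
theorem pullback_qf {M N : Type (max u v)} [L.Structure M] [L.Structure N]
    [Nonempty M] (j : M ↪[L] N)
    (hj : ∀ (n : ℕ) (φ : L.Formula (Fin n)), IsExistentialFormula φ →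
      ∀ a : Fin n → M, (φ.Realize a ↔ φ.Realize (fun i => j (a i))))
    (φ : L.Formula N) (hφ : BoundedFormula.IsQF φ) (h : φ.Realize (id : N → N)) :
    ∃ w : N → M, (∀ m, w (j m) = m) ∧ φ.Realize w := by
  classical
  obtain ⟨m0⟩ := ‹Nonempty M›
  let S : Finset N := insert (j m0) φ.freeVarFinset
  let e := S.equivFin
  let i0 : Fin S.card := e ⟨j m0, Finset.mem_insert_self _ _⟩
  let p : N → M := fun x => if h : ∃ m, j m = x then h.choose else m0
  have hp : ∀ m, p (j m) = m := by
    intro m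
    have h' : ∃ m', j m' = j m := ⟨m, rfl⟩
    simp only [p, dif_pos h']
    exact j.injective h'.choose_spec
  let idx : N → Fin S.card := fun x => if hx : x ∈ S then e ⟨x, hx⟩ else i0
  let s : Fin S.card → N := fun i => (e.symm i : N)
  have hs : ∀ x ∈ S, s (idx x) = x := by
    intro x hx
    simp [s, idx, hx]
  let g : N → Fin S.card ⊕ Fin S.card := fun x =>
    if ∃ m, j m = x then Sum.inl (idx x) else Sum.inr (idx x)
  let a : Fin S.card → M := fun i => p (s i)
  let ψ : L.BoundedFormula (Fin S.card) (S.card + 0) := BoundedFormula.relabel g φ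
  have hψ : ψ.IsQF := hφ.relabel g
  have hN : (ψ.exs).Realize (fun i => j (a i)) := by
    rw [BoundedFormula.realize_exs]
    refine ⟨s, ?_⟩
    rw [BoundedFormula.realize_relabel]
    rw [Formula.boundedFormula_realize_eq_realize]
    refine (realize_congr_free φ _ _ ?_).2 h
    intro x hx
    have hxS : x ∈ S := Finset.mem_insert_of_mem hx
    by_cases hr : ∃ m, j m = x
    · obtain ⟨m, rfl⟩ := hr
      simp [g, a, hs _ hxS, hp]
    · have := hs _ hxS
      simpa [g, hr] using this
  have hM := (hj _ ψ.exs ⟨_, ψ, hψ, rfl⟩ a).2 hN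
  rw [BoundedFormula.realize_exs] at hM
  obtain ⟨b, hb⟩ := hM
  rw [BoundedFormula.realize_relabel] at hb
  rw [Formula.boundedFormula_realize_eq_realize] at hb
  refine ⟨fun x => if ∃ m, j m = x then p x else b (idx x), ?_, ?_⟩
  · intro m
    simp [hp]
  · refine (realize_congr_free φ _ _ ?_).2 hb
    intro x hx
    have hxS : x ∈ S := Finset.mem_insert_of_mem hx
    by_cases hr : ∃ m, j m = x
    · obtain ⟨m, rfl⟩ := hr
      simp [g, a, hs _ hxS, hp]
    · simp [g, hr]

/-- Atomic diagram of `N` together with the elementary diagram of `M` pushed along `j`. -/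
def resTheory {M N : Type (max u v)} [L.Structure M] [L.Structure N] (j : M ↪[L] N) :
    L[[N]].Theory :=
  {s | ∃ φ : L.Formula N, s = Formula.equivSentence φ ∧
    ((BoundedFormula.IsQF φ ∧ φ.Realize (id : N → N)) ∨
      ∃ ψ : L.Formula M, ψ.Realize (id : M → M) ∧ φ = ψ.relabel j)}

theorem realize_equivSentence' {α : Type*} {M : Type*} [L.Structure M] [L[[α]].Structure M]
    [(L.lhomWithConstants α).IsExpansionOn M] (φ : L.Formula α) :
    (Formula.equivSentence φ).Realize M ↔ φ.Realize fun a => (L.con a : M) :=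
  Formula.realize_equivSentence M φ

theorem resTheory_sat {M N : Type (max u v)} [L.Structure M] [L.Structure N]
    [Nonempty M] (j : M ↪[L] N)
    (hj : ∀ (n : ℕ) (φ : L.Formula (Fin n)), IsExistentialFormula φ →
      ∀ a : Fin n → M, (φ.Realize a ↔ φ.Realize (fun i => j (a i)))) :
    (resTheory j).IsSatisfiable := by
  classical
  rw [Theory.isSatisfiable_iff_isFinitelySatisfiable]
  intro T0 hT0
  have key : ∃ φ : L.Formula N, BoundedFormula.IsQF φ ∧ φ.Realize (id : N → N) ∧
      ∀ w : N → M, (∀ m, w (j m) = m) → φ.Realize w →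
        ∀ s ∈ T0, ∃ θ : L.Formula N, s = Formula.equivSentence θ ∧ θ.Realize w := by
    induction T0 using Finset.induction_on with
    | empty => exact ⟨⊤, BoundedFormula.IsQF.top, by simp, by simp⟩
    | insert s T1 _ ih =>
      obtain ⟨φ, h1, h2, h3⟩ := ih (fun x hx => hT0 (by simp at hx ⊢; exact Or.inr hx))
      obtain ⟨θ, rfl, hθ⟩ := hT0 (show s ∈ _ by simp)
      rcases hθ with ⟨hq, hr⟩ | ⟨ψ, hψ, rfl⟩
      · refine ⟨φ ⊓ θ, h1.inf hq, Formula.realize_inf.2 ⟨h2, hr⟩, ?_⟩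
        intro w hw hwr t ht
        rw [Formula.realize_inf] at hwr
        rcases Finset.mem_insert.1 ht with rfl | ht
        · exact ⟨θ, rfl, hwr.2⟩
        · exact h3 w hw hwr.1 t ht
      · refine ⟨φ, h1, h2, ?_⟩
        intro w hw hwr t ht
        rcases Finset.mem_insert.1 ht with rfl | ht
        · refine ⟨_, rfl, ?_⟩
          rw [Formula.realize_relabel]
          have : w ∘ j = id := funext hw
          rwa [this]
        · exact h3 w hw hwr t ht
  obtain ⟨φ, h1, h2, h3⟩ := key
  obtain ⟨w, hw, hwr⟩ := pullback_qf j hj φ h1 h2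
  letI : (constantsOn N).Structure M := constantsOn.structure w
  have hmod : M ⊨ (T0 : L[[N]].Theory) := by
    rw [Theory.model_iff]
    intro s hs
    obtain ⟨θ, rfl, hθ⟩ := h3 w hw hwr s hs
    rw [realize_equivSentence']
    exact hθ
  exact Theory.Model.isSatisfiable M

/-- Resurrection Lemma: a Σ₁-elementary embedding `j : M → N` can be completed, by an
embedding `k : N → Q`, to an elementary embedding `k ∘ j : M → Q`. -/
theorem resurrection {M N : Type (max u v)} [L.Structure M] [L.Structure N]
    [Nonempty M] [Nonempty N] (j : M ↪[L] N)
    (hj : ∀ (n : ℕ) (φ : L.Formula (Fin n)), IsExistentialFormula φ →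
      ∀ a : Fin n → M, (φ.Realize a ↔ φ.Realize (fun i => j (a i)))) :
    ∃ (Q : BStruc L) (k : N ↪[L] Q.carrier), ElementaryEmb (k.comp j) := by
  obtain ⟨Q0⟩ := resTheory_sat j hj
  letI : L.Structure Q0 := (L.lhomWithConstants N).reduct Q0
  let c : N → Q0 := fun a => (L.con a : Q0)
  have hT : ∀ φ : L.Formula N, ((BoundedFormula.IsQF φ ∧ φ.Realize (id : N → N)) ∨
      ∃ ψ : L.Formula M, ψ.Realize (id : M → M) ∧ φ = ψ.relabel j) → φ.Realize c := by
    intro φ h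
    have h' := Theory.realize_sentence_of_mem (M := Q0) (resTheory j)
      (φ := Formula.equivSentence φ) ⟨φ, rfl, h⟩
    rwa [realize_equivSentence'] at h'
  have hqf : ∀ φ : L.Formula N, BoundedFormula.IsQF φ → (φ.Realize c ↔ φ.Realize (id : N → N)) := by
    intro φ hφ
    refine ⟨fun h => ?_, fun h => hT φ (Or.inl ⟨hφ, h⟩)⟩
    by_contra hn
    exact (Formula.realize_not.1 (hT φ.not (Or.inl ⟨hφ.not, Formula.realize_not.2 hn⟩))) h
  let k : N ↪[L] Q0 :=
    { toFun := c
      inj' := by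
        intro x y hxy
        have := hqf ((Term.var x).equal (Term.var y))
          (BoundedFormula.IsAtomic.equal _ _).isQF
        simpa using this.1 (by simpa using hxy)
      map_fun' := by
        intro n f x
        have := hqf ((Term.var (Structure.funMap f x)).equal (Term.func f fun i => Term.var (x i)))
          (BoundedFormula.IsAtomic.equal _ _).isQF
        simp only [Formula.realize_equal, Term.realize_var, Term.realize_func] at this
        exact this.2 rfl
      map_rel' := by
        intro n r x
        have := hqf (r.formula fun i => Term.var (x i))
          (BoundedFormula.IsAtomic.rel _ _).isQF
        simp only [Formula.realize_rel, Term.realize_var] at this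
        exact this }
  refine ⟨⟨Q0⟩, k, ?_⟩
  have hel : ∀ (n : ℕ) (φ : L.Formula (Fin n)) (a : Fin n → M), φ.Realize a →
      φ.Realize (fun i => c (j (a i))) := by
    intro n φ a h
    have := hT ((φ.relabel a).relabel j) (Or.inr ⟨_, Formula.realize_relabel.2 h, rfl⟩)
    rw [Formula.realize_relabel, Formula.realize_relabel] at this
    exact this
  intro n φ a
  refine ⟨fun h => ?_, fun h => hel n φ a h⟩
  by_contra hn
  exact (Formula.realize_not.1 (hel n φ.not a (Formula.realize_not.2 hn))) h

end ModelCompanionship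
end

section
/- Let τ be a first-order language, T a τ-theory, and M a T-existentially closed τ-structure. Let φ(x⃗, y⃗, z⃗) be a quantifier-free τ-formula and a⃗ a tuple of elements of M. If the Π₂ sentence ∀x⃗ ∃y⃗ φ(x⃗, y⃗, a⃗) (with parameters a⃗) holds in some model N of T_∀ having M as a substructure, then it holds in M. -/
open FirstOrder FirstOrder.Language

universe u v

namespace ModelCompanionship

variable {L : FirstOrder.Language.{u, v}}

open BoundedFormula in
theorem realize_exsN_iff {α : Type*} {K : Type*} [L.Structure K] {n k : ℕ}
    (φ : L.BoundedFormula α (n + k)) (v : α → K) (xs : Fin n → K) :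
    (exsN φ).Realize v xs ↔ ∃ ys : Fin k → K, φ.Realize v (Fin.append xs ys) := by
  induction k with
  | zero =>
    simp only [exsN]
    constructor
    · intro h
      refine ⟨Fin.elim0, ?_⟩
      simpa using h
    · rintro ⟨ys, h⟩
      have : Fin.append xs ys = xs := by
        funext i
        exact Fin.append_left xs ys i
      rwa [this] at h
  | succ k ih =>
    simp only [exsN]
    rw [ih]
    constructor
    · rintro ⟨ys, h⟩
      obtain ⟨y, h⟩ := realize_ex.1 h
      refine ⟨Fin.snoc ys y, ?_⟩
      rw [Fin.append_snoc]
      exact h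
    · rintro ⟨ys, h⟩
      refine ⟨Fin.init ys, realize_ex.2 ⟨ys (Fin.last k), ?_⟩⟩
      rw [← Fin.snoc_init_self ys, Fin.append_snoc] at h
      simpa using h

/-- Quantifier-free formulas may be re-indexed along any map of variables. -/
theorem qf_reindex {α β : Type*} {n n' : ℕ} (φ : L.BoundedFormula α n) (hφ : φ.IsQF)
    (f : α ⊕ Fin n → β ⊕ Fin n') :
    ∃ θ : L.BoundedFormula β n', θ.IsQF ∧
      ∀ (K : Type (max u v)) [L.Structure K] (v : β → K) (xs : Fin n' → K),
        θ.Realize v xs ↔ φ.Realize (fun a => Sum.elim v xs (f (Sum.inl a)))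
          (fun i => Sum.elim v xs (f (Sum.inr i))) := by
  have key : ∀ (K : Type (max u v)) (v : β → K) (xs : Fin n' → K),
      Sum.elim (fun a => Sum.elim v xs (f (Sum.inl a))) (fun i => Sum.elim v xs (f (Sum.inr i)))
        = Sum.elim v xs ∘ f := by
    intro K v xs
    funext x
    rcases x with x | x <;> rfl
  induction hφ with
  | falsum => exact ⟨⊥, BoundedFormula.isQF_bot, fun K _ v xs => Iff.rfl⟩
  | of_isAtomic h =>
    cases h with
    | equal t₁ t₂ =>
      refine ⟨(t₁.relabel f).bdEqual (t₂.relabel f),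
        (BoundedFormula.IsAtomic.equal _ _).isQF, fun K _ v xs => ?_⟩
      simp [BoundedFormula.realize_bdEqual, key]
    | rel R ts =>
      refine ⟨R.boundedFormula fun i => (ts i).relabel f,
        (BoundedFormula.IsAtomic.rel _ _).isQF, fun K _ v xs => ?_⟩
      simp [BoundedFormula.realize_rel, key]
  | imp _ _ ih₁ ih₂ =>
    obtain ⟨θ₁, q₁, h₁⟩ := ih₁
    obtain ⟨θ₂, q₂, h₂⟩ := ih₂
    refine ⟨θ₁.imp θ₂, q₁.imp q₂, fun K _ v xs => ?_⟩
    rw [BoundedFormula.realize_imp, BoundedFormula.realize_imp, h₁, h₂]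

theorem qf_restrictFreeVar {α β : Type*} [DecidableEq α] {n : ℕ} (φ : L.BoundedFormula α n)
    (hφ : φ.IsQF) (f : φ.freeVarFinset → β) : (φ.restrictFreeVar f).IsQF := by
  induction hφ with
  | falsum => exact BoundedFormula.IsQF.falsum
  | of_isAtomic h =>
    cases h with
    | equal t₁ t₂ => exact (BoundedFormula.IsAtomic.equal _ _).isQF
    | rel R ts => exact (BoundedFormula.IsAtomic.rel _ _).isQF
  | imp _ _ ih₁ ih₂ => exact (ih₁ _).imp (ih₂ _)

theorem realize_zero_iff {α K : Type*} [L.Structure K] (χ : L.Formula α) (v : α → K)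
    (xs : Fin 0 → K) : BoundedFormula.Realize χ v xs ↔ χ.Realize v := by
  rw [Formula.Realize, Subsingleton.elim xs default]

/-- A quantifier-free formula realized in a model of `T_∀` is realized in a model of `T`. -/
theorem exists_model_realize_s6 (T : L.Theory) (N : BStruc L) (hN : N.carrier ⊨ univConsequences T)
    (χ : L.Formula N.carrier) (hχ : χ.IsQF) (h : χ.Realize (id : N.carrier → N.carrier)) :
    ∃ K : BStruc L, K.carrier ⊨ T ∧ ∃ w : N.carrier → K.carrier, χ.Realize w := by
  classical
  by_contra hcon
  push Not at hcon
  let e := χ.freeVarFinset.equivFin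
  obtain ⟨θ, hθ, hr⟩ := qf_reindex (β := Empty) (n' := χ.freeVarFinset.card)
    (χ.restrictFreeVar e) (qf_restrictFreeVar χ hχ _)
    (Sum.elim (fun i => Sum.inr i) Fin.elim0)
  have hmem : θ.not.alls ∈ univConsequences T := by
    refine ⟨⟨_, θ.not, hθ.not, rfl⟩, fun K hK => ?_⟩
    refine BoundedFormula.realize_alls.2 fun xs => ?_
    rw [BoundedFormula.realize_not, hr]
    intro h1
    refine hcon K hK (fun a => if ha : a ∈ χ.freeVarFinset then xs (e ⟨a, ha⟩)
      else Classical.arbitrary _) ?_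
    have h2 := (BoundedFormula.realize_restrictFreeVar (φ := χ) (f := e)
      (v := xs) (fun a => if ha : a ∈ χ.freeVarFinset then xs (e ⟨a, ha⟩)
      else Classical.arbitrary _) (by intro a; simp)).1 h1
    exact (realize_zero_iff χ _ _).1 h2
  have h3 := BoundedFormula.realize_alls.1 (hN.realize_of_mem _ hmem)
    (fun i => ((e.symm i : χ.freeVarFinset) : N.carrier))
  rw [BoundedFormula.realize_not, hr] at h3
  apply h3
  refine (BoundedFormula.realize_restrictFreeVar (φ := χ) (f := e) id (by intro a; simp)).2 ?_
  exact (realize_zero_iff χ _ _).2 h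

/-- The quantifier-free diagram of a structure. -/
def qfDiagram (L : FirstOrder.Language.{u, v}) (N : Type (max u v)) [L.Structure N] :
    L[[N]].Theory :=
  {σ | ∃ χ : L.Formula N, χ.IsQF ∧ χ.Realize (id : N → N) ∧ σ = Formula.equivSentence χ}

theorem finite_diagram (T : L.Theory) (N : Type (max u v)) [L.Structure N]
    (T0 : Finset L[[N]].Sentence)
    (h0 : (T0 : Set L[[N]].Sentence) ⊆
      (L.lhomWithConstants N).onTheory T ∪ qfDiagram L N) :
    ∃ χ : L.Formula N, χ.IsQF ∧ χ.Realize (id : N → N) ∧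
      ∀ (K : Type (max u v)) [L.Structure K] (_ : K ⊨ T) (w : N → K), χ.Realize w →
        letI := constantsOn.structure w
        ∀ σ ∈ T0, K ⊨ σ := by
  classical
  induction T0 using Finset.induction_on with
  | empty => exact ⟨⊤, BoundedFormula.IsQF.top, by simp [Formula.Realize], by simp⟩
  | insert σ S _ ih =>
    rw [Finset.coe_insert, Set.insert_subset_iff] at h0
    obtain ⟨χ, q, r, H⟩ := ih h0.2
    rcases h0.1 with hσ | ⟨χ', q', r', rfl⟩
    · refine ⟨χ, q, r, fun K _ hK w hw => ?_⟩
      letI := constantsOn.structure w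
      intro τ hτ
      rcases Finset.mem_insert.1 hτ with rfl | hτ
      · exact (((L.lhomWithConstants N).onTheory_model T).2 hK).realize_of_mem _ hσ
      · exact H K hK w hw τ hτ
    · refine ⟨χ ⊓ χ', q.inf q', Formula.realize_inf.2 ⟨r, r'⟩, fun K _ hK w hw => ?_⟩
      letI := constantsOn.structure w
      have hw' := Formula.realize_inf.1 hw
      intro τ hτ
      rcases Finset.mem_insert.1 hτ with rfl | hτ
      · exact (Formula.realize_equivSentence K χ').2 hw'.2
      · exact H K hK w hw'.1 τ hτ

/-- Every model of `T_∀` embeds into a model of `T`. -/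
theorem exists_embedding_model (T : L.Theory) (N : BStruc L)
    (hN : N.carrier ⊨ univConsequences T) :
    ∃ K : BStruc L, K.carrier ⊨ T ∧ Nonempty (N.carrier ↪[L] K.carrier) := by
  have hsat : Theory.IsSatisfiable
      ((L.lhomWithConstants N.carrier).onTheory T ∪ qfDiagram L N.carrier) := by
    rw [Theory.isSatisfiable_iff_isFinitelySatisfiable]
    intro T0 h0
    obtain ⟨χ, q, r, H⟩ := finite_diagram T N.carrier T0 h0
    obtain ⟨K, hK, w, hw⟩ := exists_model_realize_s6 T N hN χ q r
    letI := constantsOn.structure w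
    haveI : K.carrier ⊨ (T0 : L[[N.carrier]].Theory) := ⟨fun σ hσ => H K.carrier hK w hw σ hσ⟩
    exact Theory.Model.isSatisfiable K.carrier
  obtain ⟨K⟩ := hsat
  letI : L.Structure K := (L.lhomWithConstants N.carrier).reduct K
  haveI : (L.lhomWithConstants N.carrier).IsExpansionOn K := LHom.isExpansionOn_reduct _ _
  have hKT : (K : Type _) ⊨ T :=
    ((L.lhomWithConstants N.carrier).onTheory_model T).1
      (K.is_model.mono Set.subset_union_left)
  let c : N.carrier → K := fun a => (L.con a : K)
  have hc : ∀ χ : L.Formula N.carrier, χ.IsQF → χ.Realize (id : N.carrier → N.carrier) →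
      χ.Realize c := fun χ q r =>
    (Formula.realize_equivSentence K χ).1
      (K.is_model.realize_of_mem _ (Or.inr ⟨χ, q, r, rfl⟩))
  refine ⟨⟨K⟩, hKT, ⟨⟨⟨c, ?_⟩, ?_, ?_⟩⟩⟩
  · intro x y hxy
    by_contra hne
    have := hc ((Term.var x).equal (Term.var y)).not
      (BoundedFormula.IsAtomic.equal _ _).isQF.not (by simpa [Formula.realize_not] using hne)
    rw [Formula.realize_not, Formula.realize_equal] at this
    exact this hxy
  · intro n f x
    have := hc ((Term.func f fun i => Term.var (x i)).equal (Term.var (Structure.funMap f x)))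
      (BoundedFormula.IsAtomic.equal _ _).isQF (by simp [Formula.realize_equal])
    rw [Formula.realize_equal] at this
    exact this.symm
  · intro n R x
    constructor
    · intro hR
      by_contra hne
      have := hc (R.formula fun i => Term.var (x i)).not
        (BoundedFormula.IsAtomic.rel _ _).isQF.not
        (by simpa [Formula.realize_not, Formula.realize_rel] using hne)
      rw [Formula.realize_not, Formula.realize_rel] at this
      exact this hR
    · intro hR
      have := hc (R.formula fun i => Term.var (x i))
        (BoundedFormula.IsAtomic.rel _ _).isQF
        (by simpa [Formula.realize_rel] using hR)
      rw [Formula.realize_rel] at this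
      exact this

theorem qf_embedding {α : Type*} {A B : Type*} [L.Structure A] [L.Structure B] (g : A ↪[L] B)
    {n : ℕ} (φ : L.BoundedFormula α n) (hφ : φ.IsQF) (v : α → A) (xs : Fin n → A) :
    φ.Realize (g ∘ v) (g ∘ xs) ↔ φ.Realize v xs := by
  induction hφ with
  | falsum => exact Iff.rfl
  | of_isAtomic h =>
    cases h with
    | equal t₁ t₂ =>
      simp only [BoundedFormula.realize_bdEqual, ← Sum.comp_elim, HomClass.realize_term]
      exact g.injective.eq_iff
    | rel R ts =>
      simp only [BoundedFormula.realize_rel, ← Sum.comp_elim, HomClass.realize_term]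
      exact g.map_rel R _
  | imp _ _ ih₁ ih₂ => rw [BoundedFormula.realize_imp, BoundedFormula.realize_imp, ih₁, ih₂]

/-- If a Π₂ sentence with parameters in a `T`-ec structure `M` holds in a model of `T_∀`
extending `M`, then it holds in `M`. -/
theorem pi2_reflects_to_ec (T : L.Theory)
    (M : Type (max u v)) [L.Structure M] [Nonempty M] (hM : IsEC T M)
    {p m k : ℕ} (φ : L.BoundedFormula (Fin p) (m + k)) (hφ : φ.IsQF)
    (a : Fin p → M) (N : BStruc L) (hN : N.carrier ⊨ univConsequences T)
    (j : M ↪[L] N.carrier)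
    (h : ((exsN φ).alls).Realize (fun i => j (a i))) :
    ((exsN φ).alls).Realize a := by
  obtain ⟨K, hK, ⟨g⟩⟩ := exists_embedding_model T N hN
  have hS := hM.2 K hK (g.comp j)
  refine BoundedFormula.realize_alls.2 fun b => ?_
  have hb := BoundedFormula.realize_alls.1 h (j ∘ b)
  rw [realize_exsN_iff] at hb ⊢
  obtain ⟨ys, hys⟩ := hb
  obtain ⟨θ, hθ, hr⟩ := qf_reindex (β := Fin (p + m)) (n' := k) φ hφ
    (Sum.elim (fun i => Sum.inl (Fin.castAdd m i))
      (Fin.addCases (fun i => Sum.inl (Fin.natAdd p i)) (fun i => Sum.inr i)))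
  have hr' : ∀ (A : Type (max u v)) [L.Structure A] (a : Fin p → A) (b : Fin m → A)
      (ys : Fin k → A), θ.Realize (Fin.append a b) ys ↔ φ.Realize a (Fin.append b ys) := by
    intro A _ a b ys
    rw [hr]
    have h1 : (fun i : Fin p => Sum.elim (Fin.append a b) ys
        ((Sum.elim (fun i => Sum.inl (Fin.castAdd m i))
          (Fin.addCases (fun i => Sum.inl (Fin.natAdd p i)) (fun i => Sum.inr i)) :
            Fin p ⊕ Fin (m + k) → Fin (p + m) ⊕ Fin k) (Sum.inl i))) = a := by
      funext i
      simp
    have h2 : (fun i : Fin (m + k) => Sum.elim (Fin.append a b) ys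
        ((Sum.elim (fun i => Sum.inl (Fin.castAdd m i))
          (Fin.addCases (fun i => Sum.inl (Fin.natAdd p i)) (fun i => Sum.inr i)) :
            Fin p ⊕ Fin (m + k) → Fin (p + m) ⊕ Fin k) (Sum.inr i))) = Fin.append b ys := by
      funext i
      refine Fin.addCases (fun i => ?_) (fun i => ?_) i <;> simp
    rw [h1, h2]
  have hex := hS (p + m) θ.exs ⟨k, θ, hθ, rfl⟩ (Fin.append a b) (by
    refine BoundedFormula.realize_exs.2 ⟨g ∘ ys, ?_⟩
    have h1 : (fun i => (g.comp j) (Fin.append a b i)) =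
        Fin.append (g ∘ fun i => j (a i)) (g ∘ j ∘ b) := by
      funext i
      refine Fin.addCases (fun i => ?_) (fun i => ?_) i <;> simp
    have h2 : Fin.append (g ∘ j ∘ b) (g ∘ ys) = g ∘ Fin.append (j ∘ b) ys := by
      funext i
      refine Fin.addCases (fun i => ?_) (fun i => ?_) i <;> simp
    rw [h1, hr', h2]
    exact (qf_embedding g φ hφ _ _).2 hys)
  obtain ⟨zs, hzs⟩ := BoundedFormula.realize_exs.1 hex
  exact ⟨zs, (hr' M a b zs).1 hzs⟩

end ModelCompanionship
end

section
/- (Robinson's test) Let τ be a first-order language and T a τ-theory. The following are equivalent: (a) T is model complete, i.e. whenever M and N are models of T with M a substructure of N, then M is an elementary substructure of N; (b) every model of T is T-existentially closed; (c) every existential τ-formula φ(x⃗) is T-equivalent to a universal τ-formula ψ(x⃗) in the same free variables (T ⊨ ∀x⃗ (φ(x⃗) ↔ ψ(x⃗))); (d) every τ-formula φ(x⃗) is T-equivalent to a universal τ-formula ψ(x⃗) in the same free variables. -/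
open FirstOrder FirstOrder.Language

universe u v

namespace ModelCompanionship

variable {L : FirstOrder.Language.{u, v}}

section Helpers

universe w

theorem univ_mk {α β : Type*} [Finite β] {θ : L.Formula (α ⊕ β)} (h : θ.IsQF) :
    IsUniversalFormula (θ.iAlls β) :=
  ⟨_, _, h.relabel _, rfl⟩

theorem exist_mk {α β : Type*} [Finite β] {θ : L.Formula (α ⊕ β)} (h : θ.IsQF) :
    IsExistentialFormula (θ.iExs β) :=
  ⟨_, _, h.relabel _, rfl⟩

theorem isQF_toFormula {α : Type*} {n : ℕ} {φ : L.BoundedFormula α n} (h : φ.IsQF) :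
    BoundedFormula.IsQF φ.toFormula := by
  induction h with
  | falsum => exact BoundedFormula.IsQF.falsum
  | of_isAtomic h =>
    cases h with
    | equal t₁ t₂ => exact (BoundedFormula.IsAtomic.equal _ _).isQF
    | rel R ts => exact (BoundedFormula.IsAtomic.rel _ _).isQF
  | imp _ _ h1 h2 => exact h1.imp h2

theorem isQF_frelabel {α β : Type*} {φ : L.Formula α} (h : φ.IsQF) (g : α → β) :
    (φ.relabel g).IsQF :=
  BoundedFormula.IsQF.relabel h _

theorem univ_elim {α : Type*} {ψ : L.Formula α} (h : IsUniversalFormula ψ) :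
    ∃ (m : ℕ) (θ : L.Formula (α ⊕ Fin m)), θ.IsQF ∧ ∀ (M : BStruc L) (v : α → M.carrier),
      ψ.Realize v ↔ ∀ w : Fin m → M.carrier, θ.Realize (Sum.elim v w) := by
  obtain ⟨n, χ, hχ, rfl⟩ := h
  refine ⟨n, χ.toFormula, isQF_toFormula hχ, fun M v => ?_⟩
  simp [BoundedFormula.realize_toFormula, BoundedFormula.realize_alls]

theorem univ_down {α : Type*} {ψ : L.Formula α} (h : IsUniversalFormula ψ)
    {M N : Type*} [L.Structure M] [L.Structure N] (j : M ↪[L] N) (v : α → M)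
    (hr : ψ.Realize (fun i => j (v i))) : ψ.Realize v := by
  obtain ⟨n, χ, hχ, rfl⟩ := h
  rw [BoundedFormula.realize_alls] at hr ⊢
  intro xs
  exact (hχ.realize_embedding j).1 (hr (j ∘ xs))

/-- Equivalence to a universal formula. -/
def UEq {α : Type*} (T : L.Theory) (φ : L.Formula α) : Prop :=
  ∃ ψ : L.Formula α, IsUniversalFormula ψ ∧ ∀ M : BStruc L, M.carrier ⊨ T →
    ∀ v : α → M.carrier, φ.Realize v ↔ ψ.Realize v

theorem UEq_iff {α : Type*} (T : L.Theory) (φ : L.Formula α) :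
    UEq T φ ↔ ∃ ψ : L.Formula α, IsUniversalFormula ψ ∧ FormulaConsequence T (φ.iff ψ) := by
  simp [UEq, FormulaConsequence, Formula.realize_iff]

theorem UEq.of_qf {α β : Type*} [Finite β] {T : L.Theory} {φ : L.Formula α}
    (θ : L.Formula (α ⊕ β)) (hθ : θ.IsQF)
    (h : ∀ M : BStruc L, M.carrier ⊨ T → ∀ v : α → M.carrier,
      φ.Realize v ↔ ∀ w : β → M.carrier, θ.Realize (Sum.elim v w)) : UEq T φ :=
  ⟨θ.iAlls β, univ_mk hθ, fun M hM v => by rw [h M hM v, Formula.realize_iAlls]⟩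

theorem UEq.elim {α : Type*} {T : L.Theory} {φ : L.Formula α} (hφ : UEq T φ) :
    ∃ (m : ℕ) (θ : L.Formula (α ⊕ Fin m)), θ.IsQF ∧
      ∀ M : BStruc L, M.carrier ⊨ T → ∀ v : α → M.carrier,
      φ.Realize v ↔ ∀ w : Fin m → M.carrier, θ.Realize (Sum.elim v w) := by
  obtain ⟨ψ, hψ, h⟩ := hφ
  obtain ⟨m, θ, hθ, h'⟩ := univ_elim hψ
  exact ⟨m, θ, hθ, fun M hM v => (h M hM v).trans (h' M v)⟩

theorem UEq.of_isQF {α : Type*} {T : L.Theory} {φ : L.Formula α} (h : φ.IsQF) : UEq T φ :=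
  UEq.of_qf (β := Empty) (φ.relabel Sum.inl) (isQF_frelabel h _) (fun M _ v => by
    simp [Formula.realize_relabel, Function.comp_def])

theorem UEq.congr {α : Type*} {T : L.Theory} {φ φ' : L.Formula α} (h : UEq T φ)
    (hc : ∀ M : BStruc L, M.carrier ⊨ T → ∀ v : α → M.carrier, φ'.Realize v ↔ φ.Realize v) :
    UEq T φ' := by
  obtain ⟨ψ, hψ, h⟩ := h
  exact ⟨ψ, hψ, fun M hM v => (hc M hM v).trans (h M hM v)⟩

theorem UEq.relabel {α α' : Type*} {T : L.Theory} {φ : L.Formula α} (h : UEq T φ) (g : α → α') :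
    UEq T (φ.relabel g) := by
  obtain ⟨m, θ, hθ, h⟩ := h.elim
  refine UEq.of_qf (θ.relabel (Sum.map g id)) (isQF_frelabel hθ _) fun M hM v => ?_
  rw [Formula.realize_relabel, h M hM]
  simp [Formula.realize_relabel, Sum.elim_comp_map]

theorem UEq.sup {α : Type*} {T : L.Theory} {φ₁ φ₂ : L.Formula α} (h₁ : UEq T φ₁)
    (h₂ : UEq T φ₂) : UEq T (φ₁ ⊔ φ₂) := by
  obtain ⟨m, θ, hθ, h₁⟩ := h₁.elim
  obtain ⟨m', θ', hθ', h₂⟩ := h₂.elim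
  refine UEq.of_qf (β := Fin m ⊕ Fin m')
    (θ.relabel (Sum.map id Sum.inl) ⊔ θ'.relabel (Sum.map id Sum.inr))
    ((isQF_frelabel hθ _).sup (isQF_frelabel hθ' _)) fun M hM v => ?_
  rw [Formula.realize_sup, h₁ M hM, h₂ M hM]
  simp only [Formula.realize_sup, Formula.realize_relabel, Sum.elim_comp_map, Function.comp_id]
  constructor
  · rintro (h | h) w
    · exact Or.inl (h _)
    · exact Or.inr (h _)
  · intro h
    by_contra! hc
    obtain ⟨⟨w, hw⟩, ⟨w', hw'⟩⟩ := hc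
    have := h (Sum.elim w w')
    simp only [Sum.elim_comp_inl, Sum.elim_comp_inr] at this
    tauto

theorem UEq.inf {α : Type*} {T : L.Theory} {φ₁ φ₂ : L.Formula α} (h₁ : UEq T φ₁)
    (h₂ : UEq T φ₂) : UEq T (φ₁ ⊓ φ₂) := by
  obtain ⟨m, θ, hθ, h₁⟩ := h₁.elim
  obtain ⟨m', θ', hθ', h₂⟩ := h₂.elim
  refine UEq.of_qf (β := Fin m ⊕ Fin m')
    (θ.relabel (Sum.map id Sum.inl) ⊓ θ'.relabel (Sum.map id Sum.inr))
    ((isQF_frelabel hθ _).inf (isQF_frelabel hθ' _)) fun M hM v => ?_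
  rw [Formula.realize_inf, h₁ M hM, h₂ M hM]
  simp only [Formula.realize_inf, Formula.realize_relabel, Sum.elim_comp_map, Function.comp_id]
  constructor
  · rintro ⟨h, h'⟩ w
    exact ⟨h _, h' _⟩
  · intro h
    obtain ⟨x⟩ := M.nonempty'
    refine ⟨fun w => ?_, fun w => ?_⟩
    · simpa using (h (Sum.elim w fun _ => x)).1
    · simpa using (h (Sum.elim (fun _ => x) w)).2

/-- Condition (c). -/
def CondC (T : L.Theory) : Prop :=
  ∀ (n : ℕ) (φ : L.Formula (Fin n)), IsExistentialFormula φ →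
      ∃ ψ : L.Formula (Fin n), IsUniversalFormula ψ ∧ FormulaConsequence T (φ.iff ψ)

theorem UEq.not {α : Type*} [Finite α] {T : L.Theory} (hc : CondC T) {φ : L.Formula α}
    (h : UEq T φ) : UEq T φ.not := by
  obtain ⟨m, θ, hθ, h⟩ := h.elim
  obtain ⟨k, ⟨e⟩⟩ := Finite.exists_equiv_fin α
  have hθ' : (θ.relabel (Sum.map e id)).not.IsQF := (isQF_frelabel hθ _).not
  have h1 := (UEq_iff T _).2 (hc k _ (exist_mk hθ'))
  refine (h1.relabel e.symm).congr fun M hM v => ?_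
  rw [Formula.realize_not, h M hM, Formula.realize_relabel, Formula.realize_iExs]
  simp [Formula.realize_relabel, Sum.elim_comp_map, Function.comp_assoc]

theorem UEq.all_formulas {T : L.Theory} (hc : CondC T) {k n : ℕ}
    (φ : L.BoundedFormula (Fin k) n) : UEq T φ.toFormula := by
  induction φ with
  | falsum => exact UEq.of_isQF (isQF_toFormula BoundedFormula.IsQF.falsum)
  | equal t₁ t₂ => exact UEq.of_isQF (isQF_toFormula (BoundedFormula.IsAtomic.equal t₁ t₂).isQF)
  | rel R ts => exact UEq.of_isQF (isQF_toFormula (BoundedFormula.IsAtomic.rel R ts).isQF)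
  | imp φ₁ φ₂ h₁ h₂ =>
    refine ((h₁.not hc).sup h₂).congr fun M _ v => ?_
    rw [Formula.realize_sup, Formula.realize_not]
    simp only [BoundedFormula.realize_toFormula, BoundedFormula.realize_imp]
    tauto
  | @all n φ ih =>
    obtain ⟨m, θ, hθ, h⟩ := ih.elim
    let g : (Fin k ⊕ Fin (n + 1)) ⊕ Fin m → (Fin k ⊕ Fin n) ⊕ (Unit ⊕ Fin m) :=
      Sum.elim (Sum.elim (fun i => Sum.inl (Sum.inl i))
        (Fin.snoc (α := fun _ => (Fin k ⊕ Fin n) ⊕ (Unit ⊕ Fin m))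
          (fun j => Sum.inl (Sum.inr j)) (Sum.inr (Sum.inl ()))))
        (fun z => Sum.inr (Sum.inr z))
    refine UEq.of_qf (θ.relabel g) (isQF_frelabel hθ _) fun M hM v => ?_
    have key : ∀ w : Unit ⊕ Fin m → M.carrier, Sum.elim v w ∘ g =
        Sum.elim (Sum.elim (v ∘ Sum.inl) (Fin.snoc (v ∘ Sum.inr) (w (Sum.inl ()))))
          (w ∘ Sum.inr) := by
      intro w
      funext i
      rcases i with (i | i) | i
      · simp [g]
      · refine Fin.lastCases ?_ (fun i => ?_) i <;> simp [g]
      · simp [g]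
    have h1 : ∀ x : M.carrier, φ.Realize (v ∘ Sum.inl) (Fin.snoc (v ∘ Sum.inr) x) ↔
        ∀ w : Fin m → M.carrier, θ.Realize
          (Sum.elim (Sum.elim (v ∘ Sum.inl) (Fin.snoc (v ∘ Sum.inr) x)) w) := by
      intro x
      rw [← h M hM, BoundedFormula.realize_toFormula, Sum.elim_comp_inl, Sum.elim_comp_inr]
    rw [BoundedFormula.realize_toFormula, BoundedFormula.realize_all]
    simp only [h1, Formula.realize_relabel, key]
    constructor
    · intro h w
      exact h _ _
    · intro h x w
      simpa using h (Sum.elim (fun _ => x) w)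

theorem condD_of_condC {T : L.Theory} (hc : CondC T) {n : ℕ} (φ : L.Formula (Fin n)) :
    UEq T φ := by
  have h := UEq.all_formulas hc (n := 0) φ
  refine (h.relabel (Sum.elim id Fin.elim0)).congr fun M _ v => ?_
  rw [Formula.realize_relabel, BoundedFormula.realize_toFormula, Formula.Realize]
  have h1 : (v ∘ Sum.elim id Fin.elim0) ∘ (Sum.inl : _ → Fin n ⊕ Fin 0) = v := rfl
  rw [h1]
  exact iff_of_eq (congrArg _ (Subsingleton.elim _ _))

theorem compactness {α : Type w} (T : L.Theory) (Γ : Set (L.Formula α))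
    (h : ∀ Γ₀ : Finset (L.Formula α), (Γ₀ : Set (L.Formula α)) ⊆ Γ →
      ∃ M : BStruc L, M.carrier ⊨ T ∧ ∃ v : α → M.carrier, ∀ γ ∈ Γ₀, γ.Realize v) :
    ∃ (N : Type (max u v w)) (_ : L.Structure N) (_ : Nonempty N), N ⊨ T ∧
      ∃ v : α → N, ∀ γ ∈ Γ, γ.Realize v := by
  classical
  have hs : Theory.IsSatisfiable ((L.lhomWithConstants α).onTheory T ∪
      (Set.image Formula.equivSentence Γ)) := by
    rw [Theory.isSatisfiable_iff_isFinitelySatisfiable]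
    intro T₀ hT₀
    obtain ⟨M, hM, v, hv⟩ := h ((T₀.image Formula.equivSentence.symm).filter (· ∈ Γ))
      (by intro x hx; simpa using (Finset.mem_filter.1 hx).2)
    let := constantsOn.structure v
    have : M.carrier ⊨ (L.lhomWithConstants α).onTheory T := (LHom.onTheory_model _ _).2 hM
    have : M.carrier ⊨ (T₀ : L[[α]].Theory) := by
      refine ⟨fun σ hσ => ?_⟩
      rcases hT₀ hσ with h1 | ⟨γ, hγ, rfl⟩
      · exact Theory.realize_sentence_of_mem _ h1
      · rw [Formula.realize_equivSentence]
        refine hv γ (Finset.mem_filter.2 ⟨Finset.mem_image.2 ⟨_, hσ, by simp⟩, hγ⟩)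
    exact Theory.Model.isSatisfiable M.carrier
  obtain ⟨N⟩ := hs
  let := (L.lhomWithConstants α).reduct N
  have hm := N.is_model
  rw [Theory.model_union_iff] at hm
  refine ⟨N, inferInstance, N.nonempty', (LHom.onTheory_model _ _).1 hm.1,
    fun a => (L.con a : N), fun γ hγ => ?_⟩
  rw [← Formula.realize_equivSentence]
  exact hm.2.realize_of_mem _ ⟨γ, hγ, rfl⟩

theorem finset_conj_qf {α : Type*} (Γ₀ : Finset (L.Formula α)) :
    ∃ θ : L.Formula α, θ.IsQF ∧ ∀ (K : BStruc L) (v : α → K.carrier),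
      θ.Realize v ↔ ∀ γ ∈ Γ₀, γ.IsQF → γ.Realize v := by
  classical
  induction Γ₀ using Finset.induction_on with
  | empty => exact ⟨⊤, BoundedFormula.IsQF.top, by simp⟩
  | insert a s _ ih =>
    obtain ⟨θ, hθ, h⟩ := ih
    by_cases ha : a.IsQF
    · refine ⟨a ⊓ θ, ha.inf hθ, fun K v => ?_⟩
      rw [Formula.realize_inf, h K v]
      simp [ha]
    · refine ⟨θ, hθ, fun K v => ?_⟩
      rw [h K v]
      simp [ha]

theorem finset_conj_univ {α : Type*} (Γ₀ : Finset (L.Formula α)) :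
    ∃ ψ : L.Formula α, IsUniversalFormula ψ ∧ ∀ (K : BStruc L) (v : α → K.carrier),
      ψ.Realize v ↔ ∀ γ ∈ Γ₀, IsUniversalFormula γ → γ.Realize v := by
  classical
  induction Γ₀ using Finset.induction_on with
  | empty => exact ⟨⊤, ⟨0, ⊤, BoundedFormula.IsQF.top, rfl⟩, by simp⟩
  | insert a s _ ih =>
    obtain ⟨θ, hθ, h⟩ := ih
    by_cases ha : IsUniversalFormula a
    · obtain ⟨ψ, hψ, h'⟩ := UEq.inf (T := (∅ : L.Theory)) (φ₁ := a) (φ₂ := θ)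
        ⟨a, ha, fun _ _ _ => Iff.rfl⟩ ⟨θ, hθ, fun _ _ _ => Iff.rfl⟩
      refine ⟨ψ, hψ, fun K v => ?_⟩
      rw [← h' K inferInstance, Formula.realize_inf, h K v]
      simp [ha]
    · refine ⟨θ, hθ, fun K v => ?_⟩
      rw [h K v]
      simp [ha]

/-- An embedding from a valuation respecting quantifier-free formulas. -/
theorem exists_embedding_s12 {M N : Type*} [L.Structure M] [L.Structure N] (f : M → N)
    (h : ∀ θ : L.Formula M, θ.IsQF → θ.Realize id → θ.Realize f) :
    ∃ j : M ↪[L] N, ∀ m, j m = f m := by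
  have h' : ∀ θ : L.Formula M, θ.IsQF → (θ.Realize f ↔ θ.Realize id) := by
    intro θ hθ
    refine ⟨fun hf => ?_, h θ hθ⟩
    by_contra hc
    have := h θ.not hθ.not (by rwa [Formula.realize_not])
    rw [Formula.realize_not] at this
    exact this hf
  refine ⟨⟨⟨f, fun x y hxy => ?_⟩, fun {n} F x => ?_, fun {n} R x => ?_⟩, fun _ => rfl⟩
  · have := (h' (Term.equal (Term.var x) (Term.var y))
      (BoundedFormula.IsAtomic.equal _ _).isQF).1 (by simpa [Formula.realize_equal] using hxy)
    simpa [Formula.realize_equal] using this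
  · have := (h' (Term.equal (Term.func F fun i => Term.var (x i))
      (Term.var (Structure.funMap F x))) (BoundedFormula.IsAtomic.equal _ _).isQF).2
      (by simp [Formula.realize_equal])
    simp only [Formula.realize_equal, Term.realize_func, Term.realize_var] at this
    exact this.symm
  · have := h' (R.formula fun i => Term.var (x i)) (BoundedFormula.IsAtomic.rel _ _).isQF
    simp only [Formula.realize_rel, Term.realize_var, id] at this
    exact this

/-- A formula reflected by all embeddings of models of `T` is equivalent to a universal one. -/
theorem core {T : L.Theory} {n : ℕ} (φ : L.Formula (Fin n))
    (hφ : ∀ M N : BStruc L, M.carrier ⊨ T → N.carrier ⊨ T → ∀ j : M.carrier ↪[L] N.carrier,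
      ∀ a : Fin n → M.carrier, φ.Realize (fun i => j (a i)) → φ.Realize a) : UEq T φ := by
  classical
  let Ψ : Set (L.Formula (Fin n)) := {ψ | IsUniversalFormula ψ ∧ ∀ K : BStruc L, K.carrier ⊨ T →
    ∀ v : Fin n → K.carrier, φ.Realize v → ψ.Realize v}
  have step1 : ∀ M : BStruc L, M.carrier ⊨ T → ∀ a : Fin n → M.carrier,
      (∀ ψ ∈ Ψ, ψ.Realize a) → φ.Realize a := by
    intro M hM a hΨ
    have hc := compactness (α := Fin n ⊕ M.carrier) T
      ({θ | θ.IsQF ∧ θ.Realize (Sum.elim a id)} ∪ {φ.relabel Sum.inl}) ?_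
    · obtain ⟨N, i1, i2, hN, w, hw⟩ := hc
      obtain ⟨j, hj⟩ := exists_embedding_s12 (L := L) (M := M.carrier) (N := N) (w ∘ Sum.inr) (by
        intro θ hθ hr
        have := hw (θ.relabel Sum.inr) (Or.inl ⟨isQF_frelabel hθ _, by
          rw [Formula.realize_relabel]; exact hr⟩)
        rwa [Formula.realize_relabel] at this)
      have h1 := hw (φ.relabel Sum.inl) (Or.inr rfl)
      rw [Formula.realize_relabel] at h1
      refine hφ M ⟨N⟩ hM hN j a ?_
      have h2 : (fun i => j (a i)) = w ∘ Sum.inl := by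
        funext i
        have := hw (Term.equal (Term.var (Sum.inl i)) (Term.var (Sum.inr (a i))))
          (Or.inl ⟨(BoundedFormula.IsAtomic.equal _ _).isQF, by simp [Formula.realize_equal]⟩)
        simp only [Formula.realize_equal, Term.realize_var] at this
        rw [hj]
        exact this.symm
      rw [h2]
      exact h1
    · intro Γ₀ hΓ₀
      let D : Finset (L.Formula (Fin n ⊕ M.carrier)) :=
        Γ₀.filter (fun θ => θ.Realize (Sum.elim a id))
      obtain ⟨θ, hθ, hθr⟩ := finset_conj_qf D
      have hMθ : θ.Realize (Sum.elim a id) := by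
        rw [hθr M]
        intro γ hγ _
        exact (Finset.mem_filter.1 hγ).2
      by_contra hno
      push Not at hno
      obtain ⟨m₀⟩ := M.nonempty'
      let S : Finset M.carrier :=
        insert m₀ (θ.freeVarFinset.image (Sum.elim (fun _ => m₀) id))
      have hm₀ : m₀ ∈ S := Finset.mem_insert_self _ _
      let r : M.carrier → S := fun m => if hm : m ∈ S then ⟨m, hm⟩ else ⟨m₀, hm₀⟩
      let θ' : L.Formula (Fin n ⊕ S) := θ.relabel (Sum.map id r)
      have hθ' : θ'.IsQF := isQF_frelabel hθ _
      have hmem : (θ'.not).iAlls S ∈ Ψ := by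
        refine ⟨univ_mk hθ'.not, fun K hK v hv => ?_⟩
        rw [Formula.realize_iAlls]
        intro y
        rw [Formula.realize_not]
        intro hy
        have hy' : θ.Realize (Sum.elim v (y ∘ r)) := by
          have := (Formula.realize_relabel).1 hy
          simpa [Sum.elim_comp_map] using this
        obtain ⟨γ, hγ, hγn⟩ := hno K hK (Sum.elim v (y ∘ r))
        rcases hΓ₀ hγ with h1 | h1
        · exact hγn ((hθr K _).1 hy' γ (Finset.mem_filter.2 ⟨hγ, h1.2⟩) h1.1)
        · rw [Set.mem_singleton_iff] at h1
          subst h1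
          apply hγn
          rw [Formula.realize_relabel]
          exact hv
      have := hΨ _ hmem
      rw [Formula.realize_iAlls] at this
      have h3 := this (fun s => (s : M.carrier))
      rw [Formula.realize_not] at h3
      apply h3
      refine (Formula.realize_relabel).2 ?_
      refine (BoundedFormula.realize_restrictFreeVar (φ := θ) (f := id)
        (v := fun x => Sum.elim a id (x : Fin n ⊕ M.carrier)) _ ?_).1
        ((BoundedFormula.realize_restrictFreeVar (φ := θ) (f := id)
        (v := fun x => Sum.elim a id (x : Fin n ⊕ M.carrier)) (Sum.elim a id)
          (fun _ => rfl)).2 hMθ)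
      rintro ⟨x, hx⟩
      rcases x with i | m
      · rfl
      · have hmS : m ∈ S := Finset.mem_insert_of_mem (Finset.mem_image.2 ⟨_, hx, rfl⟩)
        simp [r, hmS]
  by_contra hno
  have hc := compactness (α := Fin n) T (Ψ ∪ {φ.not}) ?_
  · obtain ⟨N, i1, i2, hN, w, hw⟩ := hc
    have h1 := hw φ.not (Or.inr rfl)
    rw [Formula.realize_not] at h1
    exact h1 (step1 ⟨N⟩ hN w fun ψ hψ => hw ψ (Or.inl hψ))
  · intro Γ₀ hΓ₀
    obtain ⟨ψ, hψ, hr⟩ := finset_conj_univ (Γ₀.filter (· ∈ Ψ))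
    by_contra hn
    push Not at hn
    refine hno ⟨ψ, hψ, fun M hM v => ⟨fun h => ?_, fun h => ?_⟩⟩
    · rw [hr]
      intro γ hγ _
      exact (Finset.mem_filter.1 hγ).2.2 M hM v h
    · by_contra hnφ
      obtain ⟨γ, hγ, hγn⟩ := hn M hM v
      rcases hΓ₀ hγ with h1 | h1
      · exact hγn ((hr M v).1 h γ (Finset.mem_filter.2 ⟨hγ, h1⟩) h1.1)
      · rw [Set.mem_singleton_iff] at h1
        subst h1
        exact hγn (by rwa [Formula.realize_not])

theorem modelComplete_of_condD {T : L.Theory} (h : ∀ (n : ℕ) (φ : L.Formula (Fin n)), UEq T φ) :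
    ModelComplete T := by
  intro M N hM hN j n
  have down : ∀ (φ : L.Formula (Fin n)) (a : Fin n → M.carrier),
      φ.Realize (fun i => j (a i)) → φ.Realize a := by
    intro φ a hr
    obtain ⟨ψ, hψ, he⟩ := h n φ
    exact (he M hM a).2 (univ_down hψ j a ((he N hN _).1 hr))
  intro φ a
  refine ⟨down φ a, fun hr => ?_⟩
  by_contra hc
  have := down φ.not a (by rwa [Formula.realize_not])
  rw [Formula.realize_not] at this
  exact this hr

end Helpers

/-- Robinson's test: model completeness is equivalent to (b) every model of `T` being
`T`-ec, to (c) every existential formula being `T`-equivalent to a universal one, and to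
(d) every formula being `T`-equivalent to a universal one. -/
theorem robinsons_test (T : L.Theory) :
    (ModelComplete T ↔ ∀ M : BStruc L, M.carrier ⊨ T → IsEC T M.carrier) ∧
    (ModelComplete T ↔ ∀ (n : ℕ) (φ : L.Formula (Fin n)), IsExistentialFormula φ →
      ∃ ψ : L.Formula (Fin n), IsUniversalFormula ψ ∧ FormulaConsequence T (φ.iff ψ)) ∧
    (ModelComplete T ↔ ∀ (n : ℕ) (φ : L.Formula (Fin n)),
      ∃ ψ : L.Formula (Fin n), IsUniversalFormula ψ ∧ FormulaConsequence T (φ.iff ψ)) := by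
  have hab : ModelComplete T → ∀ M : BStruc L, M.carrier ⊨ T → IsEC T M.carrier :=
    fun h M hM => ⟨⟨M, hM, ⟨Embedding.refl L _⟩⟩,
      fun N hN j n φ _ a hr => (h M N hM hN j n φ a).1 hr⟩
  have hbc : (∀ M : BStruc L, M.carrier ⊨ T → IsEC T M.carrier) → CondC T :=
    fun h n φ hφ => (UEq_iff T φ).1
      (core φ fun M N hM hN j a hr => (h M hM).2 N hN j n φ hφ a hr)
  have hcd : CondC T → ∀ (n : ℕ) (φ : L.Formula (Fin n)), UEq T φ :=
    fun h n φ => condD_of_condC h φ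
  have hda : (∀ (n : ℕ) (φ : L.Formula (Fin n)), UEq T φ) → ModelComplete T :=
    modelComplete_of_condD
  refine ⟨⟨hab, fun h => hda (hcd (hbc h))⟩, ⟨fun h => hbc (hab h), fun h => hda (hcd h)⟩,
    ⟨fun h n φ => (UEq_iff T φ).1 (hcd (hbc (hab h)) n φ),
      fun h => hda fun n φ => (UEq_iff T φ).2 (h n φ)⟩⟩

end ModelCompanionship
end

section
/- Let τ be a first-order language and suppose T* is a model companion of the τ-theory T. Then: (1) T* is axiomatized by its Π₂ consequences, i.e. a τ-structure models T* if and only if it satisfies every Π₂ τ-sentence that is a consequence of T*; and (2) T* is the unique model companion of T, and indeed the unique model-complete τ-theory S with S_∀ = T_∀ up to having the same models: if S is any model-complete τ-theory with S_∀ = T_∀, then S and T* have exactly the same models. -/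
open FirstOrder FirstOrder.Language

universe u v

namespace ModelCompanionship

variable {L : FirstOrder.Language.{u, v}}

/-- Compactness for a set of formulas closed under conjunction. -/
theorem compactness_inf {α : Type (max u v)} (T : L.Theory) (Δ : Set (L.Formula α))
    (hne : Δ.Nonempty) (hinf : ∀ δ₁ ∈ Δ, ∀ δ₂ ∈ Δ, δ₁ ⊓ δ₂ ∈ Δ)
    (hsat : ∀ δ ∈ Δ, ∃ N : BStruc L, N.carrier ⊨ T ∧ ∃ w : α → N.carrier, δ.Realize w) :
    ∃ N : BStruc L, N.carrier ⊨ T ∧ ∃ w : α → N.carrier, ∀ δ ∈ Δ, δ.Realize w := by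
  classical
  have key : ∀ T0 : Finset (L[[α]].Sentence),
      (T0 : Set (L[[α]].Sentence)) ⊆
        (L.lhomWithConstants α).onTheory T ∪ Formula.equivSentence '' Δ →
      ∃ δ ∈ Δ, ∀ (N : BStruc L) (w : α → N.carrier), N.carrier ⊨ T → δ.Realize w →
        ∀ σ ∈ T0, (Formula.equivSentence.symm σ).Realize w := by
    intro T0
    induction T0 using Finset.induction_on with
    | empty =>
      intro _
      obtain ⟨δ, hδ⟩ := hne
      exact ⟨δ, hδ, by simp⟩
    | insert σ T0 _ ih =>
      intro hs
      obtain ⟨δ, hδ, h1⟩ := ih (fun x hx => hs (by simpa using Or.inr hx))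
      rcases hs (by simp : σ ∈ _) with h2 | ⟨δ', hδ', rfl⟩
      · refine ⟨δ, hδ, fun N w hN hw τ hτ => ?_⟩
        rcases Finset.mem_insert.1 hτ with rfl | hτ
        · obtain ⟨ψ, hψ, rfl⟩ := h2
          rw [Formula.realize_equivSentence_symm]
          let := constantsOn.structure w
          exact ((L.lhomWithConstants α).realize_onSentence (M := N.carrier) ψ).2
            (hN.realize_of_mem ψ hψ)
        · exact h1 N w hN hw τ hτ
      · refine ⟨δ ⊓ δ', hinf _ hδ _ hδ', fun N w hN hw τ hτ => ?_⟩
        rw [Formula.realize_inf] at hw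
        rcases Finset.mem_insert.1 hτ with rfl | hτ
        · simpa using hw.2
        · exact h1 N w hN hw.1 τ hτ
  have hS : ((L.lhomWithConstants α).onTheory T ∪
      Formula.equivSentence '' Δ : L[[α]].Theory).IsSatisfiable := by
    rw [Theory.isSatisfiable_iff_isFinitelySatisfiable]
    intro T0 hT0
    obtain ⟨δ, hδ, h1⟩ := key T0 hT0
    obtain ⟨N, hN, w, hw⟩ := hsat δ hδ
    let := constantsOn.structure w
    have : N.carrier ⊨ (T0 : L[[α]].Theory) := by
      refine ⟨fun σ hσ => ?_⟩
      exact (Formula.realize_equivSentence_symm N.carrier σ w).1 (h1 N w hN hw σ hσ)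
    exact Theory.Model.isSatisfiable N.carrier
  obtain ⟨P⟩ := hS
  let := (L.lhomWithConstants α).reduct P
  have hP := P.is_model
  rw [Theory.model_union_iff] at hP
  refine ⟨⟨P⟩, ((L.lhomWithConstants α).onTheory_model (M := P) T).1 hP.1,
    fun a => (L.con a : P), fun δ hδ => ?_⟩
  exact (Formula.realize_equivSentence P δ).1 (hP.2.realize_of_mem _ ⟨δ, hδ, rfl⟩)

theorem term_support {α : Type*} (t : L.Term α) :
    ∃ s : Finset α, ∀ (N : BStruc L) (w w' : α → N.carrier),
      (∀ a ∈ s, w a = w' a) → t.realize w = t.realize w' := by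
  classical
  induction t with
  | var a => exact ⟨{a}, fun N w w' h => by simpa using h⟩
  | func f ts ih =>
    choose s hs using ih
    refine ⟨Finset.univ.biUnion s, fun N w w' h => ?_⟩
    simp only [Term.realize_func]
    congr 1
    funext i
    exact hs i N w w' fun a ha => h a (by simpa using ⟨i, ha⟩)

theorem term_support_sum {α : Type*} {n : ℕ} (t : L.Term (α ⊕ Fin n)) :
    ∃ s : Finset α, ∀ (N : BStruc L) (w w' : α → N.carrier) (xs : Fin n → N.carrier),
      (∀ a ∈ s, w a = w' a) → t.realize (Sum.elim w xs) = t.realize (Sum.elim w' xs) := by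
  classical
  obtain ⟨s, hs⟩ := term_support t
  refine ⟨s.toLeft, fun N w w' xs h => hs N _ _ ?_⟩
  rintro (a | i) ha
  · exact h a (by simpa using ha)
  · rfl

theorem formula_support {α : Type*} {n : ℕ} (φ : L.BoundedFormula α n) :
    ∃ s : Finset α, ∀ (N : BStruc L) (w w' : α → N.carrier) (xs : Fin n → N.carrier),
      (∀ a ∈ s, w a = w' a) → (φ.Realize w xs ↔ φ.Realize w' xs) := by
  classical
  induction φ with
  | falsum => exact ⟨∅, fun _ _ _ _ _ => Iff.rfl⟩
  | equal t₁ t₂ =>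
    obtain ⟨s, hs⟩ := term_support_sum t₁
    obtain ⟨s', hs'⟩ := term_support_sum t₂
    refine ⟨s ∪ s', fun N w w' xs h => ?_⟩
    simp only [BoundedFormula.Realize]
    rw [hs N w w' xs fun a ha => h a (by simp [ha]), hs' N w w' xs fun a ha => h a (by simp [ha])]
  | rel R ts =>
    choose s hs using fun i => term_support_sum (ts i)
    refine ⟨Finset.univ.biUnion s, fun N w w' xs h => ?_⟩
    simp only [BoundedFormula.Realize]
    rw [show (fun i => (ts i).realize (Sum.elim w xs)) =
      fun i => (ts i).realize (Sum.elim w' xs) from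
      funext fun i => hs i N w w' xs fun a ha => h a (by simpa using ⟨i, ha⟩)]
  | imp φ ψ ih1 ih2 =>
    obtain ⟨s, hs⟩ := ih1
    obtain ⟨s', hs'⟩ := ih2
    refine ⟨s ∪ s', fun N w w' xs h => ?_⟩
    simp only [BoundedFormula.Realize]
    rw [hs N w w' xs fun a ha => h a (by simp [ha]), hs' N w w' xs fun a ha => h a (by simp [ha])]
  | all φ ih =>
    obtain ⟨s, hs⟩ := ih
    refine ⟨s, fun N w w' xs h => ?_⟩
    simp only [BoundedFormula.Realize]
    exact forall_congr' fun x => hs N w w' _ h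

theorem fin_retract {β : Type*} (s : Finset β) :
    ∃ (n : ℕ) (f : β → Fin n) (g : Fin n → β), ∀ b ∈ s, g (f b) = b := by
  classical
  rcases isEmpty_or_nonempty β with hβ | ⟨⟨b0⟩⟩
  · exact ⟨0, fun b => hβ.elim b, fun i => i.elim0, fun b => hβ.elim b⟩
  · let e := Fintype.equivFin (Option s)
    refine ⟨_, fun b => e (if h : b ∈ s then some ⟨b, h⟩ else none),
      fun i => (e.symm i).elim b0 Subtype.val, fun b hb => ?_⟩
    simp [hb]

theorem realize_exsN {α : Type*} {M : Type*} [L.Structure M] {n k : ℕ}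
    (ψ : L.BoundedFormula α (n + k)) (w : α → M) (xs : Fin n → M) :
    (exsN ψ).Realize w xs ↔
      ∃ zs : Fin (n + k) → M, (∀ i, zs (Fin.castAdd k i) = xs i) ∧ ψ.Realize w zs := by
  induction k with
  | zero =>
    simp only [exsN]
    constructor
    · exact fun h => ⟨xs, fun i => rfl, h⟩
    · rintro ⟨zs, h1, h2⟩
      have : zs = xs := funext h1
      rwa [← this]
  | succ k ih =>
    simp only [exsN]
    rw [ih]
    constructor
    · rintro ⟨zs, h1, h2⟩
      rw [BoundedFormula.realize_ex] at h2
      obtain ⟨a, ha⟩ := h2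
      refine ⟨Fin.snoc zs a, fun i => ?_, ha⟩
      rw [← h1 i]
      exact Fin.snoc_castSucc (α := fun _ => M) a zs (Fin.castAdd k i)
    · rintro ⟨zs, h1, h2⟩
      refine ⟨Fin.init zs, fun i => h1 i, ?_⟩
      rw [BoundedFormula.realize_ex]
      exact ⟨zs (Fin.last _), by
        have h3 := Fin.snoc_init_self (α := fun _ => M) (n := n + k) zs
        exact h3.symm ▸ h2⟩

/-- Transfer of `∀∃` statements through syntactic Π₂ sentences. -/
theorem pi2_transfer {α β : Type*} (T : L.Theory) (M : BStruc L)
    (hM : ∀ ψ : L.Sentence, IsPi2Sentence ψ → Consequence T ψ → M.carrier ⊨ ψ)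
    (θ : L.Formula (α ⊕ β)) (hθ : θ.IsQF)
    (h : ∀ N : BStruc L, N.carrier ⊨ T → ∀ w : α → N.carrier, ∃ z : β → N.carrier,
      θ.Realize (Sum.elim w z)) :
    ∀ w : α → M.carrier, ∃ z : β → M.carrier, θ.Realize (Sum.elim w z) := by
  classical
  obtain ⟨s, hs⟩ := formula_support θ
  obtain ⟨m, f, g, hfg⟩ := fin_retract s.toLeft
  obtain ⟨k, f', g', hfg'⟩ := fin_retract s.toRight
  let ρ : α ⊕ β → Empty ⊕ Fin (m + k) :=
    Sum.inr ∘ Sum.elim (Fin.castAdd k ∘ f) (Fin.natAdd m ∘ f')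
  let ψ : L.BoundedFormula Empty (m + k) := BoundedFormula.relabel (n := m + k) (k := 0) ρ θ
  have hψ : ∀ (N : BStruc L) (zs : Fin (m + k) → N.carrier),
      ψ.Realize (default : Empty → N.carrier) zs ↔ θ.Realize
        (Sum.elim (fun a => zs (Fin.castAdd k (f a))) (fun b => zs (Fin.natAdd m (f' b)))) := by
    intro N zs
    refine (BoundedFormula.realize_relabel (n := 0) (m := m + k)).trans ?_
    rw [Formula.Realize]
    refine iff_of_eq ?_
    congr 1
    · funext x
      rcases x with a | b <;> rfl
    · exact Subsingleton.elim _ _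
  have hP : IsPi2Sentence (exsN ψ).alls := ⟨m, k, ψ, hθ.relabel _, rfl⟩
  have hC : Consequence T (exsN ψ).alls := by
    intro N hN
    refine BoundedFormula.realize_alls.2 fun xs => (realize_exsN _ _ _).2 ?_
    obtain ⟨z, hz⟩ := h N hN (xs ∘ f)
    refine ⟨Fin.append xs (z ∘ g'), fun i => by simp, (hψ N _).2 ?_⟩
    refine (hs N _ _ _ ?_).1 hz
    rintro (a | b) hab
    · simp
    · simp [hfg' b (by simpa using hab)]
  intro w
  obtain ⟨zs, h1, h2⟩ := (realize_exsN _ _ _).1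
    (BoundedFormula.realize_alls.1 (hM _ hP hC) (w ∘ g))
  refine ⟨fun b => zs (Fin.natAdd m (f' b)), (hs M _ _ _ ?_).1 ((hψ M zs).1 h2)⟩
  rintro (a | b) hab
  · simp [h1, hfg a (by simpa using hab)]
  · simp

/-- Universal sentences are Π₂. -/
theorem IsUniversalSentence.isPi2 {φ : L.Sentence} (h : IsUniversalSentence φ) :
    IsPi2Sentence φ := by
  obtain ⟨n, ψ, h1, rfl⟩ := h
  exact ⟨n, 0, ψ, h1, rfl⟩

/-- Transfer of universal statements through syntactic universal sentences. -/
theorem pi1_transfer {α : Type*} (T : L.Theory) (M : BStruc L)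
    (hM : ∀ ψ ∈ univConsequences T, M.carrier ⊨ ψ)
    (θ : L.Formula α) (hθ : θ.IsQF)
    (h : ∀ N : BStruc L, N.carrier ⊨ T → ∀ w : α → N.carrier, θ.Realize w) :
    ∀ w : α → M.carrier, θ.Realize w := by
  classical
  obtain ⟨s, hs⟩ := formula_support θ
  obtain ⟨m, f, g, hfg⟩ := fin_retract s
  let ψ : L.BoundedFormula Empty m :=
    BoundedFormula.relabel (n := m) (k := 0) (Sum.inr ∘ f) θ
  have hψ : ∀ (N : BStruc L) (zs : Fin m → N.carrier),
      ψ.Realize (default : Empty → N.carrier) zs ↔ θ.Realize (zs ∘ f) := by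
    intro N zs
    refine (BoundedFormula.realize_relabel (n := 0) (m := m)).trans ?_
    rw [Formula.Realize]
    refine iff_of_eq ?_
    congr 1
    exact Subsingleton.elim _ _
  have hC : ψ.alls ∈ univConsequences T := by
    refine ⟨⟨m, ψ, hθ.relabel _, rfl⟩, fun N hN => ?_⟩
    exact BoundedFormula.realize_alls.2 fun xs => (hψ N _).2 (h N hN _)
  intro w
  refine (hs M _ _ _ ?_).1 ((hψ M _).1 (BoundedFormula.realize_alls.1 (hM _ hC) (w ∘ g)))
  intro a ha
  simp [hfg a ha]

theorem qf_embedding_s15 {α : Type*} {M N : Type*} [L.Structure M] [L.Structure N]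
    (j : M ↪[L] N) (θ : L.Formula α) (hθ : θ.IsQF) (w : α → M) :
    θ.Realize (j ∘ w) ↔ θ.Realize w := by
  rw [Formula.Realize, Formula.Realize, ← hθ.realize_embedding j,
    Subsingleton.elim (j ∘ (default : Fin 0 → M)) default]

/-- A map preserving all quantifier-free formulas is an embedding. -/
theorem exists_embedding_of_qf {M N : Type*} [L.Structure M] [L.Structure N] (w : M → N)
    (h : ∀ θ : L.Formula M, θ.IsQF → θ.Realize (id : M → M) → θ.Realize w) :
    ∃ j : M ↪[L] N, ⇑j = w := by
  refine ⟨⟨⟨w, fun x y hxy => ?_⟩, fun {n} f x => ?_, fun {n} r x => ?_⟩, rfl⟩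
  · by_contra hne
    have := h (Term.equal (Term.var x) (Term.var y)).not
      (BoundedFormula.IsAtomic.equal _ _).isQF.not (by simpa using hne)
    exact (by simpa using this : ¬ w x = w y) hxy
  · have := h (Term.equal (Term.func f fun i => Term.var (x i)) (Term.var (Structure.funMap f x)))
      (BoundedFormula.IsAtomic.equal _ _).isQF (by simp)
    simp only [Formula.realize_equal, Term.realize_func, Term.realize_var] at this
    exact this.symm
  · have hq : (r.formula fun i => (Term.var (x i) : L.Term M)).IsQF :=
      (BoundedFormula.IsAtomic.rel _ _).isQF
    constructor
    · intro hr
      by_contra hne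
      have := h _ hq.not (by simpa using hne)
      rw [Formula.realize_not] at this
      exact this (by simpa [Function.comp_def] using hr)
    · intro hr
      have := h _ hq (by simpa using hr)
      simpa [Function.comp_def] using this

/-- A structure satisfying `T_∀` embeds into a model of `T`. -/
theorem exists_extension (T : L.Theory) (M : BStruc L)
    (hM : ∀ ψ ∈ univConsequences T, M.carrier ⊨ ψ) :
    ∃ N : BStruc L, N.carrier ⊨ T ∧ Nonempty (M.carrier ↪[L] N.carrier) := by
  obtain ⟨N, hN, w, hw⟩ := compactness_inf T
    {θ : L.Formula M.carrier | θ.IsQF ∧ θ.Realize (id : M.carrier → M.carrier)}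
    ⟨⊤, BoundedFormula.IsQF.top, by simp⟩
    (fun δ₁ h1 δ₂ h2 => ⟨h1.1.inf h2.1, by simpa using ⟨h1.2, h2.2⟩⟩)
    (by
      rintro δ ⟨h1, h2⟩
      by_contra hcon
      push Not at hcon
      have := pi1_transfer T M hM δ.not h1.not
        (fun N hN w => by simpa using hcon N hN w) id
      rw [Formula.realize_not] at this
      exact this h2)
  obtain ⟨j, -⟩ := exists_embedding_of_qf w fun θ h1 h2 => hw θ ⟨h1, h2⟩
  exact ⟨N, hN, ⟨j⟩⟩

/-- A substructure of a model of `T` satisfies `T_∀`. -/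
theorem univ_of_embedding (T : L.Theory) (M N : BStruc L) (hN : N.carrier ⊨ T)
    (j : M.carrier ↪[L] N.carrier) : ∀ ψ ∈ univConsequences T, M.carrier ⊨ ψ := by
  rintro _ ⟨⟨n, ψ, hψ, rfl⟩, hc⟩
  have := hc N hN
  refine BoundedFormula.realize_alls.2 fun xs => ?_
  rw [← hψ.realize_embedding j, Subsingleton.elim (j ∘ (default : Empty → M.carrier)) default]
  exact BoundedFormula.realize_alls.1 this _

/-- In a model-complete theory, a true formula follows from a quantifier-free fact. -/
theorem mc_witness (T : L.Theory) (hT : ModelComplete T) (N : BStruc L) (hN : N.carrier ⊨ T)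
    {n : ℕ} (φ : L.Formula (Fin n)) (a : Fin n → N.carrier) (h : φ.Realize a) :
    ∃ θ : L.Formula N.carrier, θ.IsQF ∧ θ.Realize (id : N.carrier → N.carrier) ∧
      ∀ N' : BStruc L, N'.carrier ⊨ T → ∀ w : N.carrier → N'.carrier,
        θ.Realize w → φ.Realize (w ∘ a) := by
  by_contra hcon
  push Not at hcon
  obtain ⟨N', hN', w, hw⟩ := compactness_inf T
    {δ : L.Formula N.carrier | ∃ θ : L.Formula N.carrier, θ.IsQF ∧
      θ.Realize (id : N.carrier → N.carrier) ∧
      ∀ (N' : BStruc L) (w : N.carrier → N'.carrier),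
        δ.Realize w ↔ θ.Realize w ∧ ¬ φ.Realize (w ∘ a)}
    ⟨(φ.relabel a).not, ⊤, BoundedFormula.IsQF.top, by simp, by
      intro N' w
      simp [Formula.realize_relabel]⟩
    (by
      rintro δ₁ ⟨θ₁, h1, h2, h3⟩ δ₂ ⟨θ₂, h1', h2', h3'⟩
      refine ⟨θ₁ ⊓ θ₂, h1.inf h1', by simpa using ⟨h2, h2'⟩, fun N' w => ?_⟩
      rw [Formula.realize_inf, Formula.realize_inf, h3, h3']
      tauto)
    (by
      rintro δ ⟨θ, h1, h2, h3⟩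
      obtain ⟨N', hN', w, h4, h5⟩ := hcon θ h1 h2
      exact ⟨N', hN', w, (h3 _ _).2 ⟨h4, h5⟩⟩)
  have hq : ∀ θ : L.Formula N.carrier, θ.IsQF → θ.Realize (id : N.carrier → N.carrier) →
      θ.Realize w ∧ ¬ φ.Realize (w ∘ a) := by
    intro θ h1 h2
    have hd := hw (θ ⊓ (φ.relabel a).not) ⟨θ, h1, h2, fun N' w => by
      simp [Formula.realize_relabel]⟩
    simpa [Formula.realize_relabel] using hd
  obtain ⟨j, rfl⟩ := exists_embedding_of_qf w fun θ h1 h2 => (hq θ h1 h2).1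
  exact (hq ⊤ BoundedFormula.IsQF.top (by simp)).2 ((hT N N' hN hN' j n φ a).2 h)

/-- A version of Σ₁-elementarity with parameters as variables. -/
def SigmaOne (M N : BStruc L) (j : M.carrier ↪[L] N.carrier) : Prop :=
  ∀ (n : ℕ) (θ : L.Formula (M.carrier ⊕ Fin n)), θ.IsQF → ∀ z : Fin n → N.carrier,
    θ.Realize (Sum.elim j z) → ∃ z' : Fin n → M.carrier, θ.Realize (Sum.elim id z')

theorem SigmaOne.general {M N : BStruc L} {j : M.carrier ↪[L] N.carrier} (hj : SigmaOne M N j)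
    {β : Type*} (θ : L.Formula (M.carrier ⊕ β)) (hθ : θ.IsQF) (z : β → N.carrier)
    (h : θ.Realize (Sum.elim j z)) : ∃ z' : β → M.carrier, θ.Realize (Sum.elim id z') := by
  classical
  obtain ⟨s, hs⟩ := formula_support θ
  obtain ⟨k, f, g, hfg⟩ := fin_retract s.toRight
  obtain ⟨z', hz'⟩ := hj k (θ.relabel (Sum.map id f)) (hθ.relabel _) (z ∘ g) (by
    rw [Formula.realize_relabel]
    refine (hs N _ _ _ ?_).1 h
    rintro (a | b) hab
    · simp
    · simp [hfg b (by simpa using hab)])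
  refine ⟨z' ∘ f, ?_⟩
  rw [Formula.realize_relabel] at hz'
  refine (hs M _ _ _ ?_).1 hz'
  rintro (a | b) hab <;> simp

/-- A Σ₁-elementary substructure of a model of a model-complete theory is a model. -/
theorem model_of_sigmaOne (T : L.Theory) (hT : ModelComplete T) (M N : BStruc L)
    (hN : N.carrier ⊨ T) (j : M.carrier ↪[L] N.carrier) (hj : SigmaOne M N j) :
    M.carrier ⊨ T := by
  classical
  refine ((j.toElementaryEmbedding ?_).theory_model_iff T).2 hN
  intro n φ x a h
  obtain ⟨θ, h1, h2, h3⟩ := mc_witness T hT N hN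
    (φ.toFormula.relabel (Sum.elim Empty.elim id)) (Fin.snoc (j ∘ x) a : Fin (n + 1) → N.carrier)
    (by
      rw [Formula.realize_relabel, BoundedFormula.realize_toFormula]
      convert h using 1
      rfl)
  let f : N.carrier → M.carrier ⊕ N.carrier := fun y =>
    if hy : ∃ m, j m = y then Sum.inl hy.choose else Sum.inr y
  have hf : ∀ m, f (j m) = Sum.inl m := by
    intro m
    have hy : ∃ m', j m' = j m := ⟨m, rfl⟩
    simp only [f, dif_pos hy]
    rw [j.injective hy.choose_spec]
  have hf' : Sum.elim j id ∘ f = id := by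
    funext y
    by_cases hy : ∃ m, j m = y
    · obtain ⟨m, rfl⟩ := hy
      simp [hf]
    · simp [f, dif_neg hy]
  obtain ⟨z, hz⟩ := hj.general (θ.relabel f) (h1.relabel _) id (by
    rw [Formula.realize_relabel, hf']
    exact h2)
  rw [Formula.realize_relabel, ← qf_embedding_s15 j _ h1] at hz
  have h4 := h3 N hN _ hz
  rw [Formula.realize_relabel, BoundedFormula.realize_toFormula] at h4
  refine ⟨Sum.elim id z (f a), ?_⟩
  convert h4 using 1
  funext i
  refine Fin.lastCases ?_ (fun i => ?_) i
  · simp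
  · simp [hf]

/-- A structure satisfying the Π₂ consequences of `T` is Σ₁-elementary in a model of `T`. -/
theorem exists_sigmaOne_extension (T : L.Theory) (M : BStruc L)
    (hM : ∀ ψ : L.Sentence, IsPi2Sentence ψ → Consequence T ψ → M.carrier ⊨ ψ) :
    ∃ N : BStruc L, N.carrier ⊨ T ∧ ∃ j : M.carrier ↪[L] N.carrier, SigmaOne M N j := by
  obtain ⟨N, hN, w, hw⟩ := compactness_inf T
    {δ : L.Formula M.carrier | ∃ θ : L.Formula (M.carrier ⊕ ℕ), θ.IsQF ∧
      (∀ (N : BStruc L) (w : M.carrier → N.carrier),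
        δ.Realize w ↔ ∀ z : ℕ → N.carrier, θ.Realize (Sum.elim w z)) ∧
      δ.Realize (id : M.carrier → M.carrier)}
    ⟨⊤, ⊤, BoundedFormula.IsQF.top, by simp, by simp⟩
    (by
      rintro δ₁ ⟨θ₁, h1, h2, h3⟩ δ₂ ⟨θ₂, h1', h2', h3'⟩
      refine ⟨θ₁ ⊓ θ₂, h1.inf h1', fun N w => ?_, by simpa using ⟨h3, h3'⟩⟩
      simp only [Formula.realize_inf, h2, h2', forall_and])
    (by
      rintro δ ⟨θ, h1, h2, h3⟩
      by_contra hcon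
      push Not at hcon
      obtain ⟨z, hz⟩ := pi2_transfer T M hM θ.not h1.not (fun N hN w => by
        have := hcon N hN w
        rw [h2] at this
        push Not at this
        simpa using this) id
      rw [Formula.realize_not] at hz
      exact hz ((h2 _ _).1 h3 z))
  have hall : ∀ (n : ℕ) (θ : L.Formula (M.carrier ⊕ Fin n)), θ.IsQF →
      (∀ z : Fin n → M.carrier, θ.Realize (Sum.elim id z)) →
      ∀ z : Fin n → N.carrier, θ.Realize (Sum.elim w z) := by
    intro n θ h1 h2
    have := hw (θ.iAlls (Fin n)) ⟨θ.relabel (Sum.map id Fin.val), h1.relabel _, by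
      intro N w
      rw [Formula.realize_iAlls]
      simp only [Formula.realize_relabel, Sum.elim_comp_map, Function.comp_id]
      refine ⟨fun h z => h _, fun h z => ?_⟩
      have hz := h (fun i => if hi : i < n then z ⟨i, hi⟩ else Classical.arbitrary _)
      convert hz using 2
      funext i
      simp, by
      rw [Formula.realize_iAlls]
      exact h2⟩
    rw [Formula.realize_iAlls] at this
    exact this
  obtain ⟨j, rfl⟩ := exists_embedding_of_qf w fun θ h1 h2 => by
    have := hall 0 (θ.relabel Sum.inl) (h1.relabel _) (fun z => by
      rw [Formula.realize_relabel]
      simpa using h2) (fun i => i.elim0)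
    rw [Formula.realize_relabel] at this
    simpa using this
  refine ⟨N, hN, j, fun n θ h1 z hz => ?_⟩
  by_contra hcon
  push Not at hcon
  have := hall n θ.not h1.not (fun z => by simpa using hcon z) z
  rw [Formula.realize_not] at this
  exact this hz

/-- If `M ⊆ N ⊆ M'` with `M, M'` models of a model-complete `U` and `N` a model of a
model-complete `T`, then `M` is a model of `T`. -/
theorem sandwich (U T : L.Theory) (hU : ModelComplete U) (hT : ModelComplete T)
    (M N M' : BStruc L) (hM : M.carrier ⊨ U) (hN : N.carrier ⊨ T) (hM' : M'.carrier ⊨ U)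
    (j : M.carrier ↪[L] N.carrier) (k : N.carrier ↪[L] M'.carrier) : M.carrier ⊨ T := by
  refine model_of_sigmaOne T hT M N hN j fun n θ h1 z hz => ?_
  let e : M.carrier ↪ₑ[L] M'.carrier :=
    ⟨k.comp j, fun n φ x => hU M M' hM hM' (k.comp j) n φ x⟩
  have h2 : (θ.iExs (Fin n)).Realize (e ∘ (id : M.carrier → M.carrier)) := by
    rw [Formula.realize_iExs]
    refine ⟨k ∘ z, ?_⟩
    rw [← qf_embedding_s15 k θ h1, Sum.comp_elim] at hz
    exact hz
  rw [e.map_formula, Formula.realize_iExs] at h2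
  exact h2

/-- A model companion `T⋆` of `T` is axiomatized by its Π₂ consequences, and is the unique
model-complete theory `S` with `S_∀ = T_∀`, up to having the same models. -/
theorem modelCompanion_pi2_axiomatized_and_unique (T Tstar : L.Theory)
    (h : IsModelCompanion T Tstar) :
    (∀ M : BStruc L, (M.carrier ⊨ Tstar ↔
      ∀ ψ : L.Sentence, IsPi2Sentence ψ → Consequence Tstar ψ → M.carrier ⊨ ψ)) ∧
    (∀ S : L.Theory, ModelComplete S → univConsequences S = univConsequences T →
      ∀ M : BStruc L, (M.carrier ⊨ S ↔ M.carrier ⊨ Tstar)) := by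
  obtain ⟨h1, h2, h3⟩ := h
  refine ⟨fun M => ⟨fun hM ψ _ hc => hc M hM, fun hM => ?_⟩,
    fun S hS hST M => ⟨fun hM => ?_, fun hM => ?_⟩⟩
  · obtain ⟨N, hN, j, hj⟩ := exists_sigmaOne_extension Tstar M hM
    exact model_of_sigmaOne Tstar h3 M N hN j hj
  · obtain ⟨A, hA, ⟨i⟩⟩ := exists_extension T M
      (by rw [← hST]; exact fun ψ hψ => hψ.2 M hM)
    obtain ⟨N, hN, ⟨i'⟩⟩ := h1 A hA
    obtain ⟨A', hA', ⟨i''⟩⟩ := h2 N hN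
    obtain ⟨M', hM', ⟨k⟩⟩ := exists_extension S N
      (by rw [hST]; exact univ_of_embedding T N A' hA' i'')
    exact sandwich S Tstar hS h3 M N M' hM hN hM' (i'.comp i) k
  · obtain ⟨A, hA, ⟨i⟩⟩ := h2 M hM
    obtain ⟨N, hN, ⟨j⟩⟩ := exists_extension S M
      (by rw [hST]; exact univ_of_embedding T M A hA i)
    obtain ⟨A', hA', ⟨i'⟩⟩ := exists_extension T N
      (by rw [← hST]; exact fun ψ hψ => hψ.2 N hN)
    obtain ⟨M', hM', ⟨k⟩⟩ := h1 A' hA'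
    exact sandwich Tstar S h3 hS M N M' hM hN hM' j (k.comp i')

end ModelCompanionship
end
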